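/- Let γ > 0, 1 < α < 2, p > 1, a > 0, b > 0, and let f be locally integrable on [0,∞). Suppose w ∈ C¹([0,∞)), w ≢ 0, the function t ↦ ₀I_t^{2−α}(w(s) − w'(0)s − w(0)) is in AC²([0,T]) for every T > 0, and for almost every t ≥ 0 one has (₀D_t^α w)(t) + a·w(t) = (₀I_t^γ f)(t) and f(t) ≥ b·|w(t)|^p. If γ ≥ α/2, α + γ ≤ 2, and w'(0) = 0, then liminf_{t→+∞} t^{1−γ}·w(t) > 0. -/

import Mathlib

/-!
Write `g_σ(x) = x ^ (σ - 1) / Γ(σ)` and let `*` be convolution on `[0, t]`. Convolving the equation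
with `g_α` turns it into the Volterra equation `w + a g_α * w = w(0) + g_{α+γ} * f`, whose unique
solution is `w = w(0) (1 - a k_1) + k_γ * f`, with the Mittag-Leffler kernel
`k_γ = ∑ (-a) ^ n g_{(n+1)α+γ}`.

Two facts about the kernels finish the proof. First, `k_γ ≥ 0` as soon as `γ ≥ α / 2`: the Laplace
transform of `a k_γ` is `s ^ (-(γ - α/2)) (1/x - x/(x ^ 2 + a))` with `x = s ^ (α/2)`, which is
completely monotone since `1/x - x/(x ^ 2 + a)` is the Laplace transform of `1 - cos (√a t)` and
`s ^ (α/2)` is a Bernstein function. Second, `g_γ - a k_γ = O(1/t)` for `α/2 ≤ γ < α`: the transform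
of this difference is `z ^ (α-γ) / (z ^ α + a)`, whose derivative is integrable along the imaginary
axis, so Fourier inversion bounds `t (g_γ(t) - a k_γ(t))`. Taking `γ = 1` gives
`1 - a k_1(t) = O(1/t)`. It also gives `k_γ(t) ≥ c t ^ (γ-1)` for large `t` when `γ < α`, and this
bound extends to every `γ ≥ α/2` because `k_{β+δ} = g_δ * k_β`.

Since `f ≥ b |w| ^ p ≥ 0` and `w` is not identically zero, `∫₀ᴹ f > 0` for some `M`. Discarding
the part of `k_γ * f` over `[M, t]` leaves `w(t) ≥ δ t ^ (γ-1) - O(1/t)` with `δ > 0`, and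
`t ^ (1-γ) / t → 0` because `γ > 0`.
-/

open MeasureTheory Filter

/-- Riemann–Liouville fractional integral of order `σ` based at `0`:
`(₀I_t^σ f)(t) = (1/Γ(σ)) ∫₀ᵗ (t−s)^{σ−1} f(s) ds`. -/
noncomputable def rlInt (σ : ℝ) (f : ℝ → ℝ) (t : ℝ) : ℝ :=
  (1 / Real.Gamma σ) * ∫ s in (0:ℝ)..t, (t - s) ^ (σ - 1) * f s

/-- The function whose second derivative is the (left) Caputo derivative of order `α ∈ (1,2]`:
for `α < 2` it is `₀I_t^{2−α}(w(s) − w'(0)·s − w(0))`, and for `α = 2` it is `w` itself. -/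
noncomputable def capKernel (α : ℝ) (w : ℝ → ℝ) : ℝ → ℝ :=
  if α = 2 then w else rlInt (2 - α) (fun s => w s - deriv w 0 * s - w 0)

/-- Left Caputo fractional derivative of order `α ∈ (1,2]`:
`(₀D_t^α w)(t) = (d²/dt²)[ ₀I_t^{2−α}(w(s) − w'(0)s − w(0)) ](t)` (second derivative of `w` when `α = 2`). -/
noncomputable def caputoD (α : ℝ) (w : ℝ → ℝ) : ℝ → ℝ :=
  deriv (deriv (capKernel α w))

/-- `g ∈ AC²([0,T])`: `g` is differentiable on `[0,T]`, its second derivative is integrable,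
and `g'` is the integral of `g''` (i.e. `g'` is absolutely continuous). -/
def AC2On (g : ℝ → ℝ) (T : ℝ) : Prop :=
  (∀ t ∈ Set.Icc (0:ℝ) T, DifferentiableAt ℝ g t) ∧
  IntervalIntegrable (deriv (deriv g)) volume 0 T ∧
  ∀ t ∈ Set.Icc (0:ℝ) T, deriv g t = deriv g 0 + ∫ s in (0:ℝ)..t, deriv (deriv g) s

/-! ### Complete monotonicity -/

/-- Complete monotonicity on `(0, ∞)` up to order `n`: `f ≥ 0`, `-f' ≥ 0`, `f'' ≥ 0`, …, with the
derivatives given as witnesses. The recursion keeps the sign in the witness: the next function is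
`g = -f'`. -/
def CompletelyMonotoneUpTo : ℕ → (ℝ → ℝ) → Prop
  | 0, f => ∀ x > 0, 0 ≤ f x
  | n + 1, f => (∀ x > 0, 0 ≤ f x) ∧
      ∃ g : ℝ → ℝ, (∀ x > 0, HasDerivAt f (-g x) x) ∧ CompletelyMonotoneUpTo n g

/-- Complete monotonicity on `(0, ∞)`, the condition which characterises the Laplace transforms of
positive measures. Values on `(-∞, 0]` are ignored. -/
def CompletelyMonotone (f : ℝ → ℝ) : Prop := ∀ n, CompletelyMonotoneUpTo n f

namespace CompletelyMonotoneUpTo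

variable {n : ℕ} {f g : ℝ → ℝ}

lemma nonneg (hf : CompletelyMonotoneUpTo n f) {x : ℝ} (hx : 0 < x) : 0 ≤ f x := by
  cases n with
  | zero => exact hf x hx
  | succ n => exact hf.1 x hx

lemma of_succ (hf : CompletelyMonotoneUpTo (n + 1) f) : CompletelyMonotoneUpTo n f := by
  induction n generalizing f with
  | zero => exact hf.1
  | succ n ih =>
    obtain ⟨hnonneg, f', hf', hn⟩ := hf
    exact ⟨hnonneg, f', hf', ih hn⟩

lemma congr (hf : CompletelyMonotoneUpTo n f) (hfg : ∀ x > 0, f x = g x) :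
    CompletelyMonotoneUpTo n g := by
  cases n with
  | zero => exact fun x hx => hfg x hx ▸ hf x hx
  | succ n =>
    obtain ⟨hnonneg, f', hf', hn⟩ := hf
    refine ⟨fun x hx => hfg x hx ▸ hnonneg x hx, f', fun x hx => ?_, hn⟩
    refine (hf' x hx).congr_of_eventuallyEq ?_
    filter_upwards [lt_mem_nhds hx] with y hy using (hfg y hy).symm

lemma add (hf : CompletelyMonotoneUpTo n f) (hg : CompletelyMonotoneUpTo n g) :
    CompletelyMonotoneUpTo n fun x => f x + g x := by
  induction n generalizing f g with
  | zero => exact fun x hx => add_nonneg (hf x hx) (hg x hx)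
  | succ n ih =>
    have hnonneg : ∀ x > 0, 0 ≤ f x + g x := fun x hx => add_nonneg (hf.nonneg hx) (hg.nonneg hx)
    obtain ⟨-, f', hf', hfn⟩ := hf
    obtain ⟨-, g', hg', hgn⟩ := hg
    exact ⟨hnonneg, _, fun x hx => ((hf' x hx).add (hg' x hx)).congr_deriv (by ring), ih hfn hgn⟩

lemma mul (hf : CompletelyMonotoneUpTo n f) (hg : CompletelyMonotoneUpTo n g) :
    CompletelyMonotoneUpTo n fun x => f x * g x := by
  induction n generalizing f g with
  | zero => exact fun x hx => mul_nonneg (hf x hx) (hg x hx)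
  | succ n ih =>
    have hnonneg : ∀ x > 0, 0 ≤ f x * g x := fun x hx => mul_nonneg (hf.nonneg hx) (hg.nonneg hx)
    have hfn := hf.of_succ
    have hgn := hg.of_succ
    obtain ⟨-, f', hf', hf'n⟩ := hf
    obtain ⟨-, g', hg', hg'n⟩ := hg
    exact ⟨hnonneg, _, fun x hx => ((hf' x hx).mul (hg' x hx)).congr_deriv (by ring),
      (ih hf'n hgn).add (ih hfn hg'n)⟩

/-- The hypotheses on `h` say that it is a Bernstein function. -/
lemma comp {h h' : ℝ → ℝ} (hg : CompletelyMonotoneUpTo n g) (hpos : ∀ x > 0, 0 < h x)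
    (hh : ∀ x > 0, HasDerivAt h (h' x) x) (hh' : CompletelyMonotoneUpTo n h') :
    CompletelyMonotoneUpTo n fun x => g (h x) := by
  induction n generalizing g with
  | zero => exact fun x hx => hg _ (hpos x hx)
  | succ n ih =>
    obtain ⟨hnonneg, g', hg', hn⟩ := hg
    refine ⟨fun x hx => hnonneg _ (hpos x hx), _, fun x hx => ?_,
      (ih hn hh'.of_succ).mul hh'.of_succ⟩
    exact ((hg' _ (hpos x hx)).comp x (hh x hx)).congr_deriv (by ring)

lemma const_mul_rpow_neg (n : ℕ) {c r : ℝ} (hc : 0 ≤ c) (hr : 0 ≤ r) :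
    CompletelyMonotoneUpTo n fun x => c * x ^ (-r) := by
  have hnonneg (x : ℝ) (hx : 0 < x) : 0 ≤ c * x ^ (-r) := by positivity
  induction n generalizing c r with
  | zero => exact hnonneg
  | succ n ih =>
    refine ⟨hnonneg, fun x => c * r * x ^ (-(r + 1)), fun x hx => ?_,
      ih (by positivity) (by positivity) fun x hx => by positivity⟩
    refine ((Real.hasDerivAt_rpow_const (Or.inl hx.ne')).const_mul c).congr_deriv ?_
    rw [show -(r + 1) = -r - 1 by ring]
    ring

lemma antitoneOn (hf : CompletelyMonotoneUpTo (n + 1) f) : AntitoneOn f (Set.Ioi 0) := by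
  obtain ⟨-, f', hf', hn⟩ := hf
  refine antitoneOn_of_hasDerivWithinAt_nonpos (f' := fun x => -f' x) (convex_Ioi 0)
    (fun x hx => (hf' x hx).continuousAt.continuousWithinAt) ?_ ?_
  all_goals rw [interior_Ioi]
  · exact fun x hx => (hf' x hx).hasDerivWithinAt
  · exact fun x hx => neg_nonpos.2 (hn.nonneg hx)

lemma sub_comp_add_one (hf : CompletelyMonotoneUpTo (n + 1) f) :
    CompletelyMonotoneUpTo n fun x => f x - f (x + 1) := by
  have hnonneg : ∀ x > 0, 0 ≤ f x - f (x + 1) := fun x hx =>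
    sub_nonneg.2 (hf.antitoneOn hx (Set.mem_Ioi.2 (by positivity)) (by linarith))
  induction n generalizing f with
  | zero => exact hnonneg
  | succ n ih =>
    obtain ⟨-, f', hf', hn⟩ := hf
    refine ⟨hnonneg, _, fun x hx => ?_, ih hn fun x hx =>
      sub_nonneg.2 (hn.antitoneOn hx (Set.mem_Ioi.2 (by positivity)) (by linarith))⟩
    have hshift := (hf' (x + 1) (by positivity)).comp_add_const x 1
    exact ((hf' x hx).sub hshift).congr_deriv (by ring)

end CompletelyMonotoneUpTo

lemma CompletelyMonotone.sub_comp_add_one {f : ℝ → ℝ} (hf : CompletelyMonotone f) :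
    CompletelyMonotone fun x => f x - f (x + 1) :=
  fun n => (hf (n + 1)).sub_comp_add_one

/-- The real part of the resolvent power `m! / (x + i c) ^ (m + 1)`, which is the Laplace transform
of `t ^ m * cos (c t)`. -/
noncomputable def reResolvent (c : ℝ) (m : ℕ) (x : ℝ) : ℝ :=
  m.factorial * ((((x : ℂ) + c * Complex.I) ^ (m + 1))⁻¹).re

lemma hasDerivAt_reResolvent (c : ℝ) (m : ℕ) {x : ℝ} (hx : x ≠ 0) :
    HasDerivAt (reResolvent c m) (-reResolvent c (m + 1) x) x := by
  set z : ℂ := (x : ℂ) + c * Complex.I with hz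
  have hz0 : z ≠ 0 := fun h => hx (by simpa [hz] using congrArg Complex.re h)
  have hinv : HasDerivAt (fun z : ℂ => (z ^ (m + 1))⁻¹)
      (-((m + 1 : ℕ) * (z ^ (m + 1 + 1))⁻¹ : ℂ)) z := by
    refine ((hasDerivAt_pow (m + 1) z).inv (pow_ne_zero _ hz0)).congr_deriv ?_
    push_cast
    field_simp
    ring
  have hre := (hinv.comp_add_const (x : ℂ) (c * Complex.I)).real_of_complex
  refine (hre.const_mul (m.factorial : ℝ)).congr_deriv ?_
  rw [reResolvent, Complex.neg_re, ← Complex.ofReal_natCast, Complex.re_ofReal_mul,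
    Nat.factorial_succ]
  push_cast
  ring

lemma abs_reResolvent_le (c : ℝ) (m : ℕ) {x : ℝ} (hx : 0 < x) :
    |reResolvent c m x| ≤ reResolvent 0 m x := by
  have hnorm : x ≤ ‖(x : ℂ) + c * Complex.I‖ := by
    simpa [abs_of_pos hx] using Complex.abs_re_le_norm ((x : ℂ) + c * Complex.I)
  have hzero : reResolvent 0 m x = m.factorial * (x ^ (m + 1))⁻¹ := by
    simp only [reResolvent, Complex.ofReal_zero, zero_mul, add_zero]
    norm_cast
  rw [hzero, reResolvent, abs_mul, Nat.abs_cast]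
  gcongr
  calc |((((x : ℂ) + c * Complex.I) ^ (m + 1))⁻¹).re|
      ≤ (‖(x : ℂ) + c * Complex.I‖ ^ (m + 1))⁻¹ := by
        simpa only [norm_inv, norm_pow] using
          Complex.abs_re_le_norm (((x : ℂ) + c * Complex.I) ^ (m + 1))⁻¹
    _ ≤ (x ^ (m + 1))⁻¹ := by gcongr

/-- For `m = 0` this is the Laplace transform of the nonnegative function `1 + e * cos (c t)`. -/
lemma completelyMonotone_reResolvent_add (c : ℝ) {e : ℝ} (he : |e| ≤ 1) (m : ℕ) :
    CompletelyMonotone fun x => reResolvent 0 m x + e * reResolvent c m x := by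
  intro n
  have hnonneg (m : ℕ) (x : ℝ) (hx : 0 < x) : 0 ≤ reResolvent 0 m x + e * reResolvent c m x := by
    have hle : |e * reResolvent c m x| ≤ reResolvent 0 m x := by
      rw [abs_mul]
      exact (mul_le_of_le_one_left (abs_nonneg _) he).trans (abs_reResolvent_le c m hx)
    linarith [neg_le_of_abs_le hle]
  induction n generalizing m with
  | zero => exact hnonneg m
  | succ n ih =>
    refine ⟨hnonneg m, _, fun x hx => ?_, ih (m + 1)⟩
    exact ((hasDerivAt_reResolvent 0 m hx.ne').add
      ((hasDerivAt_reResolvent c m hx.ne').const_mul e)).congr_deriv (by ring)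

/-! ### Positivity from the Laplace transform -/

/-- The Laplace transform of `φ` at `s` converges absolutely and has the value `L`. -/
def HasLaplaceTransform (φ : ℝ → ℝ) (s L : ℝ) : Prop :=
  IntegrableOn (fun t => Real.exp (-s * t) * φ t) (Set.Ioi 0) ∧
    ∫ t in Set.Ioi 0, Real.exp (-s * t) * φ t = L

namespace HasLaplaceTransform

variable {φ ψ : ℝ → ℝ} {s L M : ℝ}

lemma of_integral_eq (hL : L ≠ 0) (h : ∫ t in Set.Ioi 0, Real.exp (-s * t) * φ t = L) :
    HasLaplaceTransform φ s L :=
  ⟨Integrable.of_integral_ne_zero (h ▸ hL), h⟩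

lemma const_mul (c : ℝ) (hφ : HasLaplaceTransform φ s L) :
    HasLaplaceTransform (fun t => c * φ t) s (c * L) := by
  have hcomm (t : ℝ) : Real.exp (-s * t) * (c * φ t) = c * (Real.exp (-s * t) * φ t) := by ring
  simp only [HasLaplaceTransform, hcomm]
  exact ⟨hφ.1.const_mul c, by rw [integral_const_mul, hφ.2]⟩

lemma sub (hφ : HasLaplaceTransform φ s L) (hψ : HasLaplaceTransform ψ s M) :
    HasLaplaceTransform (fun t => φ t - ψ t) s (L - M) := by
  simp only [HasLaplaceTransform, mul_sub]
  exact ⟨hφ.1.sub hψ.1, by rw [integral_sub hφ.1 hψ.1, hφ.2, hψ.2]⟩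

lemma one_sub_exp_mul (hφ : HasLaplaceTransform φ s L) (hφ₁ : HasLaplaceTransform φ (s + 1) M) :
    HasLaplaceTransform (fun t => (1 - Real.exp (-t)) * φ t) s (L - M) := by
  have hsplit (t : ℝ) : Real.exp (-s * t) * ((1 - Real.exp (-t)) * φ t)
      = Real.exp (-s * t) * φ t - Real.exp (-(s + 1) * t) * φ t := by
    rw [show -(s + 1) * t = -s * t + -t by ring, Real.exp_add]
    ring
  simp only [HasLaplaceTransform, hsplit]
  exact ⟨hφ.1.sub hφ₁.1, by rw [integral_sub hφ.1 hφ₁.1, hφ.2, hφ₁.2]⟩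

end HasLaplaceTransform

/-- Each factor `1 - exp (-t)` replaces the transform `F s` by `F s - F (s + 1)`, which is again
completely monotone. -/
lemma CompletelyMonotone.integral_one_sub_exp_pow_mul_nonneg {φ F : ℝ → ℝ} {s₀ : ℝ} (hs₀ : 0 < s₀)
    (hF : CompletelyMonotone F) (hφ : ∀ s ≥ s₀, HasLaplaceTransform φ s (F s)) (j : ℕ) :
    ∀ s ≥ s₀, 0 ≤ ∫ t in Set.Ioi 0, Real.exp (-s * t) * ((1 - Real.exp (-t)) ^ j * φ t) := by
  induction j generalizing φ F with
  | zero =>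
    intro s hs
    simpa only [pow_zero, one_mul, (hφ s hs).2] using (hF 0).nonneg (hs₀.trans_le hs)
  | succ j ih =>
    have hsub := ih hF.sub_comp_add_one fun s hs =>
      (hφ s hs).one_sub_exp_mul (hφ (s + 1) (hs.le.trans (by linarith)))
    simpa only [pow_succ, mul_assoc] using hsub

section ContinuousTestFunctions

variable {T X : Type*} [MeasurableSpace T] {μ : Measure T} {E : T → X} {g : T → ℝ}

lemma integrable_continuousMap_comp_mul [TopologicalSpace X] [CompactSpace X]
    (hE : AEStronglyMeasurable E μ) (hg : Integrable g μ) (ψ : C(X, ℝ)) :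
    Integrable (fun t => ψ (E t) * g t) μ :=
  hg.bdd_mul (ψ.continuous.comp_aestronglyMeasurable hE) (ae_of_all _ fun _ => ψ.norm_coe_le_norm _)

lemma tendsto_integral_continuousMap_comp_mul [TopologicalSpace X] [CompactSpace X]
    (hE : AEStronglyMeasurable E μ) (hg : Integrable g μ) {Ψ : ℕ → C(X, ℝ)} {ψ : C(X, ℝ)}
    (hΨ : Tendsto Ψ atTop (nhds ψ)) :
    Tendsto (fun n => ∫ t, Ψ n (E t) * g t ∂μ) atTop (nhds (∫ t, ψ (E t) * g t ∂μ)) := by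
  have hbound : Tendsto (fun n => ‖Ψ n - ψ‖ * ∫ t, ‖g t‖ ∂μ) atTop (nhds 0) := by
    simpa using (tendsto_iff_norm_sub_tendsto_zero.1 hΨ).mul_const (∫ t, ‖g t‖ ∂μ)
  refine tendsto_iff_norm_sub_tendsto_zero.2
    (squeeze_zero (fun _ => norm_nonneg _) (fun n => ?_) hbound)
  rw [← integral_sub (integrable_continuousMap_comp_mul hE hg _)
    (integrable_continuousMap_comp_mul hE hg _), ← integral_const_mul]
  refine norm_integral_le_of_norm_le (hg.norm.const_mul _) (ae_of_all _ fun t => ?_)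
  rw [← sub_mul, norm_mul]
  gcongr
  exact (Ψ n - ψ).norm_coe_le_norm (E t)

lemma integral_continuousMap_comp_mul_nonneg_of_bernstein {E : T → unitInterval}
    (hE : AEStronglyMeasurable E μ) (hg : Integrable g μ)
    (hbernstein : ∀ n ν, 0 ≤ ∫ t, bernstein n ν (E t) * g t ∂μ) {ψ : C(unitInterval, ℝ)}
    (hψ : 0 ≤ ψ) : 0 ≤ ∫ t, ψ (E t) * g t ∂μ := by
  refine ge_of_tendsto' (tendsto_integral_continuousMap_comp_mul hE hg
    (bernsteinApproximation_uniform ψ)) fun n => ?_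
  simp only [bernsteinApproximation.apply, smul_eq_mul, Finset.sum_mul,
    mul_comm (bernstein _ _ _) (ψ _), mul_assoc]
  rw [integral_finsetSum _ fun k _ => (integrable_continuousMap_comp_mul hE hg _).const_mul _]
  refine Finset.sum_nonneg fun k _ => ?_
  rw [integral_const_mul]
  exact mul_nonneg (hψ _) (hbernstein n k)

/-- If `g` were negative at a point `t`, so would be its integral against a tent at `E t` whose
support is so small that its points correspond, under the left inverse `E'` of `E`, to points
where `g < 0`. -/
lemma nonneg_of_integral_continuousMap_comp_mul_nonneg [TopologicalSpace T] [OpensMeasurableSpace T]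
    [μ.IsOpenPosMeasure] [PseudoMetricSpace X] [CompactSpace X] {U : Set T} (hU : IsOpen U)
    (hE : ContinuousOn E U) (hEm : AEStronglyMeasurable E (μ.restrict U)) {E' : X → T}
    (hE' : ∀ t ∈ U, ContinuousAt E' (E t)) (hinv : Set.LeftInvOn E' E U)
    (hg : IntegrableOn g U μ) (hgc : ContinuousOn g U)
    (h : ∀ ψ : C(X, ℝ), 0 ≤ ψ → 0 ≤ ∫ t in U, ψ (E t) * g t ∂μ) : ∀ t ∈ U, 0 ≤ g t := by
  by_contra! ⟨t, ht, hneg⟩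
  have hev : ∀ᶠ x in nhds (E t), g (E' x) < 0 := by
    have hcomp : ContinuousAt (fun x => g (E' x)) (E t) :=
      ContinuousAt.comp (by simpa [hinv ht] using hgc.continuousAt (hU.mem_nhds ht)) (hE' t ht)
    exact hcomp.eventually_lt_const (by simpa [hinv ht] using hneg)
  obtain ⟨δ, hδ, hball⟩ := Metric.eventually_nhds_iff.1 hev
  let tent : C(X, ℝ) := ⟨fun x => max 0 (δ - dist x (E t)), by fun_prop⟩
  have htent : 0 ≤ tent := fun x => le_max_left _ _
  have hle : ∀ u ∈ U, tent (E u) * g u ≤ 0 := by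
    intro u hu
    rcases lt_or_ge (dist (E u) (E t)) δ with hnear | hfar
    · exact mul_nonpos_of_nonneg_of_nonpos (htent _) (by simpa [hinv hu] using (hball hnear).le)
    · simp [tent, hfar]
  have hzero : ∫ u in U, -(tent (E u) * g u) ∂μ = 0 := by
    refine le_antisymm ?_ (setIntegral_nonneg hU.measurableSet fun u hu => neg_nonneg.2 (hle u hu))
    rw [integral_neg]
    exact neg_nonpos.2 (h tent htent)
  have hae := (setIntegral_eq_zero_iff_of_nonneg_ae ((ae_restrict_mem hU.measurableSet).mono
    fun u hu => neg_nonneg.2 (hle u hu))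
    (integrable_continuousMap_comp_mul hEm hg tent).neg).1 hzero
  have hcont : ContinuousOn (fun u => -(tent (E u) * g u)) U :=
    ((tent.continuous.comp_continuousOn hE).mul hgc).neg
  have hat : -(tent (E t) * g t) = 0 :=
    Measure.eqOn_open_of_ae_eq hae hU hcont continuousOn_const ht
  have htop : tent (E t) = δ := by simp [tent, hδ.le]
  rw [htop] at hat
  nlinarith

end ContinuousTestFunctions

/-- Bernstein's theorem for a transform with a density: for `x = exp (-t)` the weights of
`CompletelyMonotone.integral_one_sub_exp_pow_mul_nonneg` contain all Bernstein polynomials. -/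
lemma CompletelyMonotone.nonneg_of_hasLaplaceTransform {φ F : ℝ → ℝ} {s₀ : ℝ} (hs₀ : 0 < s₀)
    (hF : CompletelyMonotone F) (hL : ∀ s ≥ s₀, HasLaplaceTransform φ s (F s))
    (hφ : ContinuousOn φ (Set.Ioi 0)) {t : ℝ} (ht : 0 < t) : 0 ≤ φ t := by
  let E : ℝ → unitInterval := fun t => Set.projIcc 0 1 zero_le_one (Real.exp (-t))
  have hE : ∀ t > 0, (E t : ℝ) = Real.exp (-t) := fun t ht => by
    simp only [E, Set.projIcc_of_mem zero_le_one (x := Real.exp (-t))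
      ⟨by positivity, Real.exp_le_one_iff.2 (by linarith)⟩]
  have hEc : Continuous E := continuous_projIcc.comp (by fun_prop)
  have hbernstein (n ν : ℕ) :
      0 ≤ ∫ t in Set.Ioi 0, bernstein n ν (E t) * (Real.exp (-s₀ * t) * φ t) := by
    have hweight (t : ℝ) (ht : t ∈ Set.Ioi 0) :
        bernstein n ν (E t) * (Real.exp (-s₀ * t) * φ t) =
          n.choose ν * (Real.exp (-(s₀ + ν) * t) * ((1 - Real.exp (-t)) ^ (n - ν) * φ t)) := by
      rw [bernstein_apply, hE t ht, show -(s₀ + ν) * t = -s₀ * t + ν * (-t) by ring, Real.exp_add,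
        Real.exp_nat_mul]
      ring
    rw [setIntegral_congr_fun measurableSet_Ioi hweight, integral_const_mul]
    exact mul_nonneg (by positivity)
      (hF.integral_one_sub_exp_pow_mul_nonneg hs₀ hL (n - ν) (s₀ + ν) (by simp))
  have hnonneg : 0 ≤ Real.exp (-s₀ * t) * φ t := by
    refine nonneg_of_integral_continuousMap_comp_mul_nonneg (μ := volume)
      (E' := fun x => -Real.log x) isOpen_Ioi hEc.continuousOn hEc.aestronglyMeasurable
      (fun t ht => ?_) (fun t ht => ?_) (hL s₀ le_rfl).1 (by fun_prop) (fun ψ hψ => ?_) t ht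
    · refine ((Real.continuousAt_log ?_).comp continuous_subtype_val.continuousAt).neg
      rw [hE t ht]
      positivity
    · simp only [hE t ht, Real.log_exp, neg_neg]
    · exact integral_continuousMap_comp_mul_nonneg_of_bernstein hEc.aestronglyMeasurable
        (hL s₀ le_rfl).1 hbernstein hψ
  exact nonneg_of_mul_nonneg_right hnonneg (by positivity)

/-! ### Convolution on the half-line -/

/-- The one-sided convolution `(K * f)(t) = ∫₀ᵗ K (t - s) f s ds`. For fixed `t ≥ 0` it only depends
on the values of `K` and `f` on `(0, t)`. -/
noncomputable def causalConv (K f : ℝ → ℝ) (t : ℝ) : ℝ := ∫ s in 0..t, K (t - s) * f s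

section CausalConv

variable {K K₁ K₂ f g κ φ : ℝ → ℝ} {t : ℝ}

lemma causalConv_zero_right (K f : ℝ → ℝ) : causalConv K f 0 = 0 :=
  intervalIntegral.integral_same

lemma causalConv_comm (K f : ℝ → ℝ) (t : ℝ) : causalConv K f t = causalConv f K t := by
  have hflip := intervalIntegral.integral_comp_sub_left (a := 0) (b := t)
    (fun s => K (t - s) * f s) t
  simp only [sub_sub_cancel, sub_self, sub_zero] at hflip
  rw [causalConv, ← hflip]
  simp only [causalConv, mul_comm]

lemma causalConv_eq_setIntegral_Ioo (ht : 0 ≤ t) :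
    causalConv K f t = ∫ s in Set.Ioo 0 t, K (t - s) * f s := by
  rw [causalConv, intervalIntegral.integral_of_le ht, integral_Ioc_eq_integral_Ioo]

lemma causalConv_congr (ht : 0 ≤ t) (hK : Set.EqOn K₁ K₂ (Set.Ioo 0 t))
    (hf : Set.EqOn f g (Set.Ioo 0 t)) : causalConv K₁ f t = causalConv K₂ g t := by
  rw [causalConv_eq_setIntegral_Ioo ht, causalConv_eq_setIntegral_Ioo ht]
  refine setIntegral_congr_fun measurableSet_Ioo fun s hs => ?_
  simp only [hK (show t - s ∈ Set.Ioo 0 t from ⟨by linarith [hs.2], by linarith [hs.1]⟩), hf hs]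

lemma causalConv_const_mul_right (K : ℝ → ℝ) (c : ℝ) (f : ℝ → ℝ) (t : ℝ) :
    causalConv K (fun s => c * f s) t = c * causalConv K f t := by
  simp only [causalConv, ← intervalIntegral.integral_const_mul, mul_left_comm]

lemma causalConv_const_mul_left (c : ℝ) (K f : ℝ → ℝ) (t : ℝ) :
    causalConv (fun x => c * K x) f t = c * causalConv K f t := by
  rw [causalConv_comm, causalConv_const_mul_right, causalConv_comm]

lemma causalConv_congr_ae (ht : 0 ≤ t) (hfg : ∀ᵐ s ∂volume.restrict (Set.Ici 0), f s = g s) :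
    causalConv K f t = causalConv K g t := by
  rw [causalConv_eq_setIntegral_Ioo ht, causalConv_eq_setIntegral_Ioo ht]
  refine integral_congr_ae ((ae_restrict_of_ae_restrict_of_subset
    (fun s hs => hs.1.le) hfg).mono fun s hs => ?_)
  simp only [hs]

lemma intervalIntegrable_causalConv_integrand (hK : Continuous K)
    (hf : IntervalIntegrable f volume 0 t) :
    IntervalIntegrable (fun s => K (t - s) * f s) volume 0 t :=
  hf.continuousOn_mul (by fun_prop)

lemma causalConv_add_right (hK : Continuous K) (hf : IntervalIntegrable f volume 0 t)
    (hg : IntervalIntegrable g volume 0 t) :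
    causalConv K (fun s => f s + g s) t = causalConv K f t + causalConv K g t := by
  simp only [causalConv, mul_add]
  exact intervalIntegral.integral_add (intervalIntegrable_causalConv_integrand hK hf)
    (intervalIntegrable_causalConv_integrand hK hg)

lemma causalConv_add_left (hK₁ : Continuous K₁) (hK₂ : Continuous K₂)
    (hf : IntervalIntegrable f volume 0 t) :
    causalConv (fun x => K₁ x + K₂ x) f t = causalConv K₁ f t + causalConv K₂ f t := by
  simp only [causalConv, add_mul]
  exact intervalIntegral.integral_add (intervalIntegrable_causalConv_integrand hK₁ hf)
    (intervalIntegrable_causalConv_integrand hK₂ hf)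

lemma continuousOn_causalConv (hK : Continuous K)
    (hf : ∀ T > 0, IntervalIntegrable f volume 0 T) :
    ContinuousOn (causalConv K f) (Set.Ici 0) := by
  intro t ht
  set f₀ := (Set.Ioi 0).indicator f with hf₀
  have hT : (0 : ℝ) < t + 1 := add_pos_of_nonneg_of_pos ht one_pos
  have hf₀_int : IntervalIntegrable f₀ volume (-1) (t + 1) := by
    rw [intervalIntegrable_iff_integrableOn_Ioc_of_le (by linarith), hf₀,
      integrableOn_indicator_iff measurableSet_Ioi]
    exact ((intervalIntegrable_iff_integrableOn_Ioc_of_le hT.le).1 (hf _ hT)).mono_set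
      fun s hs => ⟨hs.1, hs.2.2⟩
  obtain ⟨B, hB⟩ := (isCompact_Icc (a := (-2 : ℝ)) (b := t + 2)).exists_bound_of_continuousOn
    hK.continuousOn
  have hbound : ∀ᶠ x in nhds t, ∀ᵐ s ∂volume.restrict (Set.uIoc (-1) (t + 1)),
      ‖K (x - s) * f₀ s‖ ≤ B * ‖f₀ s‖ := by
    filter_upwards [Icc_mem_nhds (sub_one_lt t) (lt_add_one t)] with x hx
    filter_upwards [ae_restrict_mem measurableSet_uIoc] with s hs
    rw [Set.uIoc_of_le (by linarith)] at hs
    rw [norm_mul]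
    gcongr
    exact hB _ ⟨by linarith [hx.1, hs.2], by linarith [hx.2, hs.1]⟩
  have hcont : ContinuousAt (fun p : ℝ × ℝ => ∫ s in 0..p.2, K (p.1 - s) * f₀ s) (t, t) :=
    intervalIntegral.continuousAt_parametric_primitive_of_dominated (fun s => B * ‖f₀ s‖) (-1)
      (t + 1) (fun x => (Continuous.aestronglyMeasurable (by fun_prop)).mul
        hf₀_int.def'.aestronglyMeasurable) hbound (hf₀_int.norm.const_mul B)
      (ae_of_all _ fun s => Continuous.continuousAt (by fun_prop)) ⟨by norm_num, hT⟩
      ⟨by linarith [Set.mem_Ici.1 ht], by linarith⟩ (measure_singleton t)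
  have hdiag : ContinuousAt (causalConv K f₀) t :=
    ContinuousAt.comp (f := fun x : ℝ => (x, x)) hcont (by fun_prop)
  refine hdiag.continuousWithinAt.congr_of_mem (fun x hx => ?_) ht
  exact causalConv_congr hx (fun _ _ => rfl) fun s hs => (Set.indicator_of_mem hs.1 f).symm

lemma causalConv_nonneg (ht : 0 ≤ t) (hK : ∀ x ∈ Set.Ioo 0 t, 0 ≤ K x)
    (hf : ∀ x ∈ Set.Ioo 0 t, 0 ≤ f x) : 0 ≤ causalConv K f t := by
  rw [causalConv_eq_setIntegral_Ioo ht]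
  exact setIntegral_nonneg measurableSet_Ioo fun s hs =>
    mul_nonneg (hK _ ⟨by linarith [hs.2], by linarith [hs.1]⟩) (hf s hs)

lemma causalConv_eq_convolution (ht : 0 ≤ t) (hκ : Set.EqOn κ K (Set.Ioo 0 t))
    (hφ : Set.EqOn φ f (Set.Ioo 0 t)) (hsupp : ∀ s ∉ Set.Ioo 0 t, φ s * κ (t - s) = 0) :
    causalConv K f t = convolution φ κ (ContinuousLinearMap.mul ℝ ℝ) volume t := by
  rw [causalConv_congr ht hκ.symm hφ.symm, causalConv_eq_setIntegral_Ioo ht]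
  simp only [convolution, ContinuousLinearMap.mul_apply', mul_comm (κ _)]
  exact setIntegral_eq_integral_of_forall_compl_eq_zero hsupp

lemma causalConv_eq_convolution_indicator {x : ℝ} (hx : x ∈ Set.Icc 0 t) :
    causalConv K f x = convolution ((Set.Ioo 0 t).indicator f) ((Set.Ioo 0 t).indicator K)
      (ContinuousLinearMap.mul ℝ ℝ) volume x := by
  have hsub : Set.Ioo 0 x ⊆ Set.Ioo 0 t := Set.Ioo_subset_Ioo_right hx.2
  refine causalConv_eq_convolution hx.1 (fun s hs => Set.indicator_of_mem (hsub hs) K)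
    (fun s hs => Set.indicator_of_mem (hsub hs) f) fun s hs => ?_
  by_cases hs₀ : 0 < s
  · have hxs : x - s ∉ Set.Ioo 0 t := fun h => hs ⟨hs₀, sub_pos.1 h.1⟩
    rw [Set.indicator_of_notMem hxs, mul_zero]
  · rw [Set.indicator_of_notMem fun h => hs₀ h.1, zero_mul]

/-- The bound on `|K₁| * |K₂|` makes the double integral converge absolutely for every integrable
`f`, even when `K₁` and `K₂` are singular at `0`. -/
lemma causalConv_assoc {B : ℝ} (ht : 0 ≤ t) (hK₁ : IntervalIntegrable K₁ volume 0 t)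
    (hK₂ : IntervalIntegrable K₂ volume 0 t) (hf : IntervalIntegrable f volume 0 t)
    (hB : ∀ x ∈ Set.Ioo 0 t, causalConv (fun s => |K₁ s|) (fun s => |K₂ s|) x ≤ B) :
    causalConv K₁ (causalConv K₂ f) t = causalConv (causalConv K₁ K₂) f t := by
  set S := Set.Ioo 0 t
  have hint {h : ℝ → ℝ} (hh : IntervalIntegrable h volume 0 t) : Integrable (S.indicator h) :=
    (integrable_indicator_iff measurableSet_Ioo).2
      ((intervalIntegrable_iff_integrableOn_Ioo_of_le ht).1 hh)
  have hreflect {s : ℝ} (hs : s ∈ S) : t - s ∈ S := ⟨by linarith [hs.2], by linarith [hs.1]⟩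
  have hbdd : ConvolutionExistsAt (fun s => ‖S.indicator f s‖) (convolution
      (fun s => ‖S.indicator K₂ s‖) (fun s => ‖S.indicator K₁ s‖) (ContinuousLinearMap.mul ℝ ℝ)
      volume) t (ContinuousLinearMap.mul ℝ ℝ) := by
    refine ((hint hf).norm.mul_const B).mono' ((hint hf).norm.aestronglyMeasurable.mul
      (((hint hK₂).norm.integrable_convolution _ (hint hK₁).norm).aestronglyMeasurable
        |>.comp_quasiMeasurePreserving (quasiMeasurePreserving_sub_left_of_right_invariant _ t)))
      (ae_of_all _ fun s => ?_)
    by_cases hs : s ∈ S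
    · have hs' := hreflect hs
      simp only [norm_indicator_eq_indicator_norm, ContinuousLinearMap.mul_apply']
      rw [← causalConv_eq_convolution_indicator (Set.Ioo_subset_Icc_self hs'), norm_mul,
        Set.indicator_of_mem hs, norm_norm, Real.norm_of_nonneg (causalConv_nonneg hs'.1.le
          (fun _ _ => norm_nonneg _) fun _ _ => norm_nonneg _)]
      gcongr
      exact hB _ hs'
    · simp [Set.indicator_of_notMem hs]
  calc causalConv K₁ (causalConv K₂ f) t
      = convolution (convolution (S.indicator f) (S.indicator K₂) (ContinuousLinearMap.mul ℝ ℝ))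
          (S.indicator K₁) (ContinuousLinearMap.mul ℝ ℝ) volume t := by
        refine causalConv_eq_convolution ht (fun s hs => Set.indicator_of_mem hs K₁)
          (fun s hs => (causalConv_eq_convolution_indicator (Set.Ioo_subset_Icc_self hs)).symm)
          fun s hs => ?_
        rw [Set.indicator_of_notMem fun h => hs (sub_sub_cancel t s ▸ hreflect h), mul_zero]
    _ = convolution (S.indicator f) (convolution (S.indicator K₂) (S.indicator K₁)
          (ContinuousLinearMap.mul ℝ ℝ)) (ContinuousLinearMap.mul ℝ ℝ) volume t :=
        convolution_assoc _ _ _ _ (fun x y z => mul_assoc x y z) (hint hf).aestronglyMeasurable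
          (hint hK₂).aestronglyMeasurable (hint hK₁).aestronglyMeasurable
          ((hint hf).ae_convolution_exists _ (hint hK₂))
          ((hint hK₂).norm.ae_convolution_exists _ (hint hK₁).norm) hbdd
    _ = causalConv (causalConv K₁ K₂) f t := by
        refine (causalConv_eq_convolution ht
          (fun s hs => (causalConv_eq_convolution_indicator (Set.Ioo_subset_Icc_self hs)).symm)
          (fun s hs => Set.indicator_of_mem hs f) fun s hs => ?_).symm
        rw [Set.indicator_of_notMem hs, zero_mul]

lemma causalConv_assoc_of_continuous (ht : 0 ≤ t) (hK₁ : Continuous K₁) (hK₂ : Continuous K₂)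
    (hf : IntervalIntegrable f volume 0 t) :
    causalConv K₁ (causalConv K₂ f) t = causalConv (causalConv K₁ K₂) f t := by
  obtain ⟨B, hB⟩ := isCompact_Icc.exists_bound_of_continuousOn
    ((continuousOn_causalConv hK₁.abs fun T _ => hK₂.abs.intervalIntegrable 0 T).mono
      (fun _ hx => hx.1 : Set.Icc 0 t ⊆ Set.Ici 0))
  exact causalConv_assoc ht (hK₁.intervalIntegrable 0 t) (hK₂.intervalIntegrable 0 t) hf
    fun x hx => (le_abs_self _).trans (hB x (Set.Ioo_subset_Icc_self hx))

end CausalConv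

/-! ### Riemann–Liouville kernels -/

/-- The Riemann–Liouville kernel `g_σ(x) = x ^ (σ - 1) / Γ(σ)`, with which `₀I_t^σ f = g_σ * f`.
Only its values for `x ≥ 0` are meaningful. -/
noncomputable def rlKernel (σ x : ℝ) : ℝ := x ^ (σ - 1) / Real.Gamma σ

section RLKernel

variable {σ τ s t x y : ℝ} {f : ℝ → ℝ}

lemma rlKernel_one (x : ℝ) : rlKernel 1 x = 1 := by simp [rlKernel]

lemma rlKernel_nonneg (hσ : 0 < σ) (hx : 0 ≤ x) : 0 ≤ rlKernel σ x :=
  div_nonneg (Real.rpow_nonneg hx _) (Real.Gamma_pos_of_pos hσ).le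

lemma rlKernel_le_rlKernel (hσ : 1 ≤ σ) (hx : 0 ≤ x) (hxy : x ≤ y) :
    rlKernel σ x ≤ rlKernel σ y :=
  div_le_div_of_nonneg_right (Real.rpow_le_rpow hx hxy (sub_nonneg.2 hσ))
    (Real.Gamma_pos_of_pos (one_pos.trans_le hσ)).le

lemma continuous_rlKernel (hσ : 1 ≤ σ) : Continuous (rlKernel σ) :=
  (Real.continuous_rpow_const (sub_nonneg.2 hσ)).div_const _

lemma continuousOn_rlKernel (σ : ℝ) : ContinuousOn (rlKernel σ) (Set.Ioi 0) :=
  (continuousOn_id.rpow_const fun _ hx => Or.inl (ne_of_gt hx)).div_const _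

lemma intervalIntegrable_rlKernel (hσ : 0 < σ) (t : ℝ) :
    IntervalIntegrable (rlKernel σ) volume 0 t :=
  (intervalIntegral.intervalIntegrable_rpow' (by linarith)).div_const _

lemma intervalIntegrable_rlKernel_sub_left (hσ : 0 < σ) (t : ℝ) :
    IntervalIntegrable (fun s => rlKernel σ (t - s)) volume 0 t := by
  simpa using ((intervalIntegrable_rlKernel hσ t).comp_sub_left t).symm

lemma rlInt_eq_causalConv (σ : ℝ) (f : ℝ → ℝ) (t : ℝ) :
    rlInt σ f t = causalConv (rlKernel σ) f t := by
  rw [rlInt, causalConv, ← intervalIntegral.integral_const_mul]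
  simp only [rlKernel, div_mul_eq_mul_div, one_mul]

lemma integral_sub_rpow_mul_rpow (hσ : 0 < σ) (hτ : 0 < τ) (hx : 0 < x) :
    ∫ s in 0..x, (x - s) ^ (σ - 1) * s ^ (τ - 1) =
      x ^ (σ + τ - 1) * ProbabilityTheory.beta τ σ := by
  have hcomplex : ((∫ s in 0..x, (x - s) ^ (σ - 1) * s ^ (τ - 1) : ℝ) : ℂ) =
      (x ^ (σ + τ - 1) : ℝ) * Complex.betaIntegral τ σ := by
    have hscaled := Complex.betaIntegral_scaled (τ : ℂ) (σ : ℂ) hx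
    rw [← intervalIntegral.integral_ofReal, Complex.ofReal_cpow hx.le, add_comm σ]
    push_cast
    rw [← hscaled]
    refine intervalIntegral.integral_congr fun s hs => ?_
    rw [Set.uIcc_of_le hx.le] at hs
    rw [Complex.ofReal_cpow hs.1, Complex.ofReal_cpow (sub_nonneg.2 hs.2), mul_comm]
    push_cast
    rfl
  rw [ProbabilityTheory.beta_eq_betaIntegralReal τ σ hτ hσ, ← Complex.re_ofReal_mul, ← hcomplex,
    Complex.ofReal_re]

lemma causalConv_rlKernel_rlKernel (hσ : 0 < σ) (hτ : 0 < τ) (hx : 0 < x) :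
    causalConv (rlKernel σ) (rlKernel τ) x = rlKernel (σ + τ) x := by
  simp only [causalConv, rlKernel, div_mul_div_comm]
  rw [intervalIntegral.integral_div, integral_sub_rpow_mul_rpow hσ hτ hx, ProbabilityTheory.beta,
    add_comm τ]
  have := (Real.Gamma_pos_of_pos hσ).ne'
  have := (Real.Gamma_pos_of_pos hτ).ne'
  field_simp

lemma causalConv_rlKernel_causalConv_rlKernel (hσ : 0 < σ) (hτ : 0 < τ) (hστ : 1 ≤ σ + τ)
    (ht : 0 ≤ t) (hf : IntervalIntegrable f volume 0 t) :
    causalConv (rlKernel σ) (causalConv (rlKernel τ) f) t =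
      causalConv (rlKernel (σ + τ)) f t := by
  rw [causalConv_assoc (B := rlKernel (σ + τ) t) ht (intervalIntegrable_rlKernel hσ t)
    (intervalIntegrable_rlKernel hτ t) hf fun x hx => ?_]
  · exact causalConv_congr ht (fun x hx => causalConv_rlKernel_rlKernel hσ hτ hx.1) fun _ _ => rfl
  · rw [causalConv_congr (K₂ := rlKernel σ) (g := rlKernel τ) hx.1.le
      (fun _ hs => abs_of_nonneg (rlKernel_nonneg hσ hs.1.le))
      (fun _ hs => abs_of_nonneg (rlKernel_nonneg hτ hs.1.le)),
      causalConv_rlKernel_rlKernel hσ hτ hx.1]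
    exact rlKernel_le_rlKernel hστ hx.1.le hx.2.le

lemma hasLaplaceTransform_rlKernel (hσ : 0 < σ) (hs : 0 < s) :
    HasLaplaceTransform (rlKernel σ) s (s ^ (-σ)) := by
  refine .of_integral_eq (Real.rpow_pos_of_pos hs _).ne' ?_
  have hG := (Real.Gamma_pos_of_pos hσ).ne'
  have hrpow := Real.integral_rpow_mul_exp_neg_mul_Ioi hσ hs
  simp only [rlKernel, mul_div_assoc', integral_div, neg_mul]
  simp only [mul_comm (Real.exp _), hrpow, one_div, Real.inv_rpow hs.le, Real.rpow_neg hs.le,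
    mul_div_cancel_right₀ _ hG]

end RLKernel

/-! ### Mittag-Leffler kernels -/

/-- The Mittag-Leffler kernel `k_γ(x) = x ^ (α + γ - 1) E_{α,α+γ}(-a x ^ α)`, written as the series
`∑ (-a) ^ n g_{(n+1)α+γ}(x)`. Replacing `x` by `max x 0` makes it continuous on the whole line. -/
noncomputable def mlKernel (a α γ x : ℝ) : ℝ :=
  ∑' n : ℕ, (-a) ^ n * rlKernel ((n + 1) * α + γ) (max x 0)

lemma factorial_succ_le_Gamma {n : ℕ} {σ : ℝ} (h : n + 2 ≤ σ) :
    ((n + 1).factorial : ℝ) ≤ Real.Gamma σ := by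
  have hn : (2 : ℝ) ≤ n + 2 := le_add_of_nonneg_left n.cast_nonneg
  rw [← Real.Gamma_nat_eq_factorial]
  push_cast
  rw [add_assoc, one_add_one_eq_two]
  exact Real.Gamma_strictMonoOn_Ici.monotoneOn hn (hn.trans h) h

section MLKernel

variable {a α γ δ s x y : ℝ}

lemma succ_le_mlKernel_index (hα : 1 ≤ α) (hγ : 0 ≤ γ) (n : ℕ) : n + 1 ≤ ((n : ℝ) + 1) * α + γ := by
  nlinarith [(n.cast_nonneg : (0 : ℝ) ≤ n)]

lemma one_le_mlKernel_index (hα : 1 ≤ α) (hγ : 0 ≤ γ) (n : ℕ) : 1 ≤ ((n : ℝ) + 1) * α + γ :=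
  (le_add_of_nonneg_left n.cast_nonneg).trans (succ_le_mlKernel_index hα hγ n)

lemma mlKernel_index_pos (hα : 1 ≤ α) (hγ : 0 ≤ γ) (n : ℕ) : 0 < ((n : ℝ) + 1) * α + γ :=
  one_pos.trans_le (one_le_mlKernel_index hα hγ n)

lemma summable_abs_pow_mul_rlKernel (a : ℝ) (hα : 1 ≤ α) (hγ : 0 ≤ γ) (hx : 0 < x) :
    Summable fun n : ℕ => |a| ^ n * rlKernel ((n + 1) * α + γ) x := by
  rw [← summable_nat_add_iff 1]
  refine .of_nonneg_of_le (fun n => mul_nonneg (by positivity)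
      (rlKernel_nonneg (mlKernel_index_pos hα hγ _) hx.le)) (fun n => ?_)
    ((Real.summable_pow_div_factorial (|a| * x ^ α)).mul_left (|a| * x ^ (2 * α + γ - 1)))
  have hΓ : (n.factorial : ℝ) ≤ Real.Gamma (((n + 1 : ℕ) + 1) * α + γ) := by
    refine le_trans (mod_cast Nat.factorial_le n.le_succ) (factorial_succ_le_Gamma ?_)
    convert succ_le_mlKernel_index hα hγ (n + 1) using 1
    push_cast
    ring
  have hpow : x ^ (((n + 1 : ℕ) + 1) * α + γ - 1) = x ^ (2 * α + γ - 1) * (x ^ α) ^ n := by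
    rw [← Real.rpow_mul_natCast hx.le, ← Real.rpow_add hx]
    push_cast
    ring_nf
  calc |a| ^ (n + 1) * rlKernel (((n + 1 : ℕ) + 1) * α + γ) x
      ≤ |a| ^ (n + 1) * (x ^ (2 * α + γ - 1) * (x ^ α) ^ n / n.factorial) := by
        rw [rlKernel, hpow]
        gcongr
    _ = |a| * x ^ (2 * α + γ - 1) * ((|a| * x ^ α) ^ n / n.factorial) := by ring

lemma norm_mlKernel_term_le (a : ℝ) (hα : 1 ≤ α) (hγ : 0 ≤ γ) (hxy : x ≤ y) (hy : 0 ≤ y) (n : ℕ) :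
    ‖(-a) ^ n * rlKernel ((n + 1) * α + γ) (max x 0)‖ ≤
      |a| ^ n * rlKernel ((n + 1) * α + γ) y := by
  rw [norm_mul, norm_pow, norm_neg, Real.norm_eq_abs a,
    Real.norm_of_nonneg (rlKernel_nonneg (mlKernel_index_pos hα hγ n) (le_max_right x 0))]
  gcongr
  exact rlKernel_le_rlKernel (one_le_mlKernel_index hα hγ n) (le_max_right x 0) (max_le hxy hy)

lemma hasSum_mlKernel (a : ℝ) (hα : 1 ≤ α) (hγ : 0 ≤ γ) (x : ℝ) :
    HasSum (fun n : ℕ => (-a) ^ n * rlKernel ((n + 1) * α + γ) (max x 0)) (mlKernel a α γ x) := by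
  have hy : 0 < |x| + 1 := by positivity
  exact (Summable.of_norm_bounded (summable_abs_pow_mul_rlKernel a hα hγ hy)
    (norm_mlKernel_term_le a hα hγ (by linarith [le_abs_self x]) hy.le)).hasSum

lemma continuous_mlKernel_term (a : ℝ) (hα : 1 ≤ α) (hγ : 0 ≤ γ) (n : ℕ) :
    Continuous fun x => (-a) ^ n * rlKernel ((n + 1) * α + γ) (max x 0) :=
  continuous_const.mul ((continuous_rlKernel (one_le_mlKernel_index hα hγ n)).comp (by fun_prop))

lemma continuous_mlKernel (a : ℝ) (hα : 1 ≤ α) (hγ : 0 ≤ γ) : Continuous (mlKernel a α γ) := by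
  refine continuous_iff_continuousAt.2 fun x => ?_
  have hy : 0 < |x| + 1 := by positivity
  have hcont : ContinuousOn (mlKernel a α γ) (Set.Iio (|x| + 1)) :=
    continuousOn_tsum (fun n => (continuous_mlKernel_term a hα hγ n).continuousOn)
      (summable_abs_pow_mul_rlKernel a hα hγ hy)
      fun n _ hz => norm_mlKernel_term_le a hα hγ (le_of_lt hz) hy.le n
  exact hcont.continuousAt (Iio_mem_nhds (by linarith [le_abs_self x]))

lemma causalConv_rlKernel_mlKernel_term (hα : 1 ≤ α) (hγ : 0 ≤ γ) (hδ : 0 < δ) (hx : 0 < x)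
    (n : ℕ) :
    causalConv (rlKernel δ) (fun y => (-a) ^ n * rlKernel ((n + 1) * α + γ) (max y 0)) x =
      (-a) ^ n * rlKernel ((n + 1) * α + (γ + δ)) x := by
  rw [causalConv_const_mul_right, causalConv_congr (g := rlKernel ((n + 1) * α + γ)) hx.le
    (fun _ _ => rfl) fun y hy => congrArg _ (max_eq_left hy.1.le),
    causalConv_rlKernel_rlKernel hδ (mlKernel_index_pos hα hγ n) hx]
  ring_nf

lemma causalConv_rlKernel_mlKernel (a : ℝ) (hα : 1 ≤ α) (hγ : 0 ≤ γ) (hδ : 0 < δ) (hx : 0 < x) :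
    causalConv (rlKernel δ) (mlKernel a α γ) x = mlKernel a α (γ + δ) x := by
  have hkernel := intervalIntegrable_rlKernel_sub_left hδ x
  have hsum : HasSum (fun n : ℕ => causalConv (rlKernel δ)
      (fun y => (-a) ^ n * rlKernel ((n + 1) * α + γ) (max y 0)) x)
      (causalConv (rlKernel δ) (mlKernel a α γ) x) := by
    refine intervalIntegral.hasSum_integral_of_dominated_convergence
      (fun n s => (|a| ^ n * rlKernel ((n + 1) * α + γ) x) * |rlKernel δ (x - s)|)
      (fun n => hkernel.def'.aestronglyMeasurable.mul
        (continuous_mlKernel_term a hα hγ n).aestronglyMeasurable)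
      (fun n => ae_of_all _ fun s hs => ?_)
      (ae_of_all _ fun _ _ => (summable_abs_pow_mul_rlKernel a hα hγ hx).mul_right _) ?_
      (ae_of_all _ fun s _ => (hasSum_mlKernel a hα hγ s).mul_left _)
    · rw [Set.uIoc_of_le hx.le] at hs
      rw [norm_mul, mul_comm, Real.norm_eq_abs (rlKernel δ _)]
      gcongr
      exact norm_mlKernel_term_le a hα hγ hs.2 hx.le n
    · simp only [tsum_mul_right]
      exact hkernel.abs.const_mul _
  simp only [causalConv_rlKernel_mlKernel_term hα hγ hδ hx] at hsum
  have hsum' := hasSum_mlKernel a hα (add_nonneg hγ hδ.le) x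
  rw [max_eq_left hx.le] at hsum'
  exact hsum.unique hsum'

lemma mlKernel_add_mul_mlKernel (a : ℝ) (hα : 1 ≤ α) (hγ : 0 ≤ γ) (hx : 0 ≤ x) :
    mlKernel a α γ x + a * mlKernel a α (γ + α) x = rlKernel (γ + α) x := by
  have hsum := hasSum_mlKernel a hα hγ x
  have hshift := (hasSum_mlKernel a hα (by linarith : 0 ≤ γ + α) x).mul_left (-a)
  rw [max_eq_left hx] at hsum hshift
  have hterm (n : ℕ) : -a * ((-a) ^ n * rlKernel ((n + 1) * α + (γ + α)) x) =
      (-a) ^ (n + 1) * rlKernel (((n + 1 : ℕ) + 1) * α + γ) x := by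
    push_cast
    ring_nf
  simp only [hterm] at hshift
  have htail := ((hasSum_nat_add_iff' 1).2 hsum).unique hshift
  simp only [Finset.range_one, Finset.sum_singleton, pow_zero, one_mul, Nat.cast_zero,
    zero_add] at htail
  rw [add_comm α γ] at htail
  linarith

end MLKernel

section MLKernelBounds

variable {a α γ e s t : ℝ}

lemma rpow_neg_mlKernel_index (hs : 0 < s) (α γ : ℝ) (n : ℕ) :
    s ^ (-((n + 1) * α + γ)) = s ^ (-γ) / s ^ α * (s ^ α)⁻¹ ^ n := by
  rw [← Real.rpow_neg hs.le, ← Real.rpow_mul_natCast hs.le, ← Real.rpow_sub hs, ← Real.rpow_add hs]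
  ring_nf

lemma hasSum_integral_exp_mul_mlKernel_term (hα : 1 ≤ α) (hγ : 0 ≤ γ) (hs : 0 < s)
    (hsa : |a| < s ^ α) :
    HasSum (fun n : ℕ => s ^ (-γ) / s ^ α * (-a * (s ^ α)⁻¹) ^ n)
      (∫ t in Set.Ioi 0, Real.exp (-s * t) * mlKernel a α γ t) := by
  have hr : |a| * (s ^ α)⁻¹ < 1 := by
    rwa [← div_eq_mul_inv, div_lt_one (Real.rpow_pos_of_pos hs α)]
  have hlap (n : ℕ) := (hasLaplaceTransform_rlKernel (mlKernel_index_pos hα hγ n) hs)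
  have hnorm (n : ℕ) : ∫ t in Set.Ioi 0,
      ‖(-a) ^ n * (Real.exp (-s * t) * rlKernel ((n + 1) * α + γ) t)‖ =
      s ^ (-γ) / s ^ α * (|a| * (s ^ α)⁻¹) ^ n := by
    rw [mul_pow, mul_left_comm, ← rpow_neg_mlKernel_index hs, ← (hlap n).2,
      ← integral_const_mul]
    refine setIntegral_congr_fun measurableSet_Ioi fun t ht => ?_
    simp only [norm_mul, norm_pow, norm_neg, Real.norm_eq_abs a, Real.norm_of_nonneg
      (rlKernel_nonneg (mlKernel_index_pos hα hγ n) (le_of_lt ht)),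
      Real.norm_of_nonneg (Real.exp_pos _).le]
  have hsum := hasSum_integral_of_summable_integral_norm
    (fun n => (hlap n).1.const_mul ((-a) ^ n)) (by
      simp only [hnorm]
      exact (summable_geometric_of_lt_one (by positivity) hr).mul_left _)
  have hterm (n : ℕ) : (-a) ^ n * (s ^ (-γ) / s ^ α * (s ^ α)⁻¹ ^ n) =
      s ^ (-γ) / s ^ α * (-a * (s ^ α)⁻¹) ^ n := by ring
  simp only [integral_const_mul, (hlap _).2, rpow_neg_mlKernel_index hs, hterm] at hsum
  have htsum : Set.EqOn (fun t => Real.exp (-s * t) * mlKernel a α γ t)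
      (fun t => ∑' n : ℕ, (-a) ^ n * (Real.exp (-s * t) * rlKernel ((n + 1) * α + γ) t))
      (Set.Ioi 0) := fun t ht => by
    simp only [mlKernel, max_eq_left (Set.mem_Ioi.1 ht).le, ← tsum_mul_left,
      mul_left_comm (Real.exp _)]
  rwa [setIntegral_congr_fun measurableSet_Ioi htsum]

lemma hasLaplaceTransform_mlKernel (hα : 1 ≤ α) (hγ : 0 ≤ γ) (hs : 0 < s) (hsa : |a| < s ^ α) :
    HasLaplaceTransform (mlKernel a α γ) s (s ^ (-γ) / (s ^ α + a)) := by
  have hsα := Real.rpow_pos_of_pos hs α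
  have hden : 0 < s ^ α + a := by linarith [neg_abs_le a]
  refine .of_integral_eq (div_pos (Real.rpow_pos_of_pos hs _) hden).ne' ?_
  have hr : ‖-a * (s ^ α)⁻¹‖ < 1 := by
    rwa [norm_mul, norm_neg, norm_inv, Real.norm_of_nonneg hsα.le, ← div_eq_mul_inv,
      div_lt_one hsα]
  rw [(hasSum_integral_exp_mul_mlKernel_term hα hγ hs hsa).unique
    ((hasSum_geometric_of_norm_lt_one hr).mul_left _),
    show 1 - -a * (s ^ α)⁻¹ = (s ^ α + a) / s ^ α by field_simp; ring]
  field_simp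

/-- The function is `s ^ (-(γ - α/2))` times `1 / x + e x / (x ^ 2 + a)` evaluated at the Bernstein
function `x = s ^ (α/2)`, and `x / (x ^ 2 + a)` is the real part of `(x + i √a)⁻¹`. -/
lemma completelyMonotone_rpow_neg_add_mul (ha : 0 ≤ a) (hα₀ : 0 ≤ α) (hα₂ : α ≤ 2)
    (hγ : α / 2 ≤ γ) (he : |e| ≤ 1) :
    CompletelyMonotone fun s => s ^ (-γ) + e * (s ^ (-γ) * (s ^ α / (s ^ α + a))) := by
  intro n
  have hBernstein : CompletelyMonotoneUpTo n fun s : ℝ => (α / 2) * s ^ (-(1 - α / 2)) :=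
    .const_mul_rpow_neg n (by linarith) (by linarith)
  have hcomp := (completelyMonotone_reResolvent_add √a he 0 n).comp
    (fun s hs => Real.rpow_pos_of_pos hs (α / 2)) (fun s hs =>
      (Real.hasDerivAt_rpow_const (p := α / 2) (Or.inl hs.ne')).congr_deriv (by rw [neg_sub]))
    hBernstein
  have hpow : CompletelyMonotoneUpTo n fun s : ℝ => 1 * s ^ (-(γ - α / 2)) :=
    .const_mul_rpow_neg n zero_le_one (by linarith)
  refine (hpow.mul hcomp).congr fun s hs => ?_
  have := Real.rpow_pos_of_pos hs (α / 2)
  have hsα : s ^ α = (s ^ (α / 2)) ^ 2 := by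
    rw [← Real.rpow_mul_natCast hs.le, Nat.cast_ofNat, div_mul_cancel₀ α two_ne_zero]
  have hsγ : s ^ (-(γ - α / 2)) = s ^ (-γ) * s ^ (α / 2) := by
    rw [← Real.rpow_add hs, neg_sub, sub_eq_neg_add]
  have hre (c y : ℝ) : reResolvent c 0 y = y / (y ^ 2 + c ^ 2) := by
    simp [reResolvent, Complex.inv_re, Complex.normSq_add_mul_I]
  simp only [hre, Real.sq_sqrt ha, hsα, hsγ]
  field_simp
  ring

lemma eventually_abs_lt_rpow (a : ℝ) (hα : 0 < α) : ∀ᶠ s : ℝ in atTop, |a| < s ^ α :=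
  (tendsto_rpow_atTop hα).eventually_gt_atTop _

lemma rlKernel_sub_mul_nonneg (ha : 0 ≤ a) (hα₁ : 1 ≤ α) (hα₂ : α ≤ 2) (hγ : α / 2 ≤ γ)
    (he : |e| ≤ 1) (ht : 0 < t) :
    0 ≤ rlKernel γ t - e * (rlKernel γ t - a * mlKernel a α γ t) := by
  have hγ₀ : 0 < γ := by linarith
  obtain ⟨s₀, hs₀⟩ := ((eventually_abs_lt_rpow (α := α) a (by linarith)).and
    (eventually_gt_atTop 0)).exists_forall_of_atTop
  refine (completelyMonotone_rpow_neg_add_mul (e := -e) ha (by linarith) hα₂ hγ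
    (by rwa [abs_neg])).nonneg_of_hasLaplaceTransform
    (φ := fun t => rlKernel γ t - e * (rlKernel γ t - a * mlKernel a α γ t))
    (hs₀ s₀ le_rfl).2 (fun s hs => ?_) ?_ ht
  · obtain ⟨hsa, hs⟩ := hs₀ s hs
    have hg := hasLaplaceTransform_rlKernel hγ₀ hs
    have hk := hasLaplaceTransform_mlKernel hα₁ hγ₀.le hs hsa
    convert hg.sub ((hg.sub (hk.const_mul a)).const_mul e) using 1
    have : 0 < s ^ α + a := add_pos_of_pos_of_nonneg (Real.rpow_pos_of_pos hs α) ha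
    field_simp
    ring
  · have hg := continuousOn_rlKernel γ
    have hk := (continuous_mlKernel a hα₁ hγ₀.le).continuousOn (s := Set.Ioi 0)
    fun_prop

lemma mlKernel_nonneg (ha : 0 < a) (hα₁ : 1 ≤ α) (hα₂ : α ≤ 2) (hγ : α / 2 ≤ γ) (ht : 0 < t) :
    0 ≤ mlKernel a α γ t := by
  have h := rlKernel_sub_mul_nonneg (e := 1) ha.le hα₁ hα₂ hγ abs_one.le ht
  rw [one_mul, sub_sub_cancel] at h
  exact nonneg_of_mul_nonneg_right h ha

lemma abs_rlKernel_sub_mul_mlKernel_le (ha : 0 ≤ a) (hα₁ : 1 ≤ α) (hα₂ : α ≤ 2) (hγ : α / 2 ≤ γ)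
    (ht : 0 < t) : |rlKernel γ t - a * mlKernel a α γ t| ≤ rlKernel γ t := by
  have hpos := rlKernel_sub_mul_nonneg (e := 1) ha hα₁ hα₂ hγ abs_one.le ht
  have hneg := rlKernel_sub_mul_nonneg (e := -1) ha hα₁ hα₂ hγ (by rw [abs_neg, abs_one]) ht
  exact abs_le.2 ⟨by linarith, by linarith⟩

end MLKernelBounds

/-! ### Pointwise bounds from the Laplace transform on the right half-plane -/

open FourierTransform in
lemma norm_le_integral_of_norm_fourier_le {y : ℝ → ℂ} {P : ℝ → ℝ} {t : ℝ} (hy : Integrable y)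
    (hP : Integrable P) (hcont : ContinuousAt y t) (hle : ∀ᵐ ω, ‖𝓕 y ω‖ ≤ P ω) :
    ‖y t‖ ≤ ∫ ω, P ω := by
  have hmeas : AEStronglyMeasurable (𝓕 y) volume :=
    (VectorFourier.fourierIntegral_continuous Real.continuous_fourierChar
      (innerSL ℝ).continuous₂ hy).aestronglyMeasurable
  have hint : Integrable (𝓕 y) := hP.mono' hmeas hle
  rw [← hy.fourierInv_fourier_eq hint hcont, Real.fourierInv_eq]
  refine (norm_integral_le_integral_norm _).trans ?_
  simp only [Circle.norm_smul]
  exact integral_mono_ae hint.norm hP hle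

/-- The Laplace transform `∫₀^∞ exp (-z t) φ t dt` at complex `z`. -/
noncomputable def complexLaplace (φ : ℝ → ℂ) (z : ℂ) : ℂ :=
  ∫ t in Set.Ioi (0 : ℝ), Complex.exp (-z * t) * φ t

section ComplexLaplace

variable {φ : ℝ → ℂ} {z : ℂ}

lemma norm_exp_neg_mul_ofReal (z : ℂ) (t : ℝ) :
    ‖Complex.exp (-z * t)‖ = Real.exp (-z.re * t) := by
  rw [Complex.norm_exp, Complex.re_mul_ofReal, Complex.neg_re]

open FourierTransform in
lemma fourier_indicator_exp_mul (φ : ℝ → ℂ) (ε ω : ℝ) :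
    𝓕 ((Set.Ioi (0 : ℝ)).indicator fun t : ℝ => Complex.exp (-(ε : ℂ) * t) * φ t) ω =
      complexLaplace φ (ε + 2 * Real.pi * ω * Complex.I) := by
  rw [Real.fourier_real_eq_integral_exp_smul, complexLaplace,
    ← integral_indicator measurableSet_Ioi]
  refine integral_congr_ae (ae_of_all _ fun t => ?_)
  simp only [Set.indicator, smul_eq_mul, mul_ite, mul_zero, ← mul_assoc, ← Complex.exp_add]
  push_cast
  ring_nf

/-- Fourier inversion bounds `exp (-ε t) ‖φ t‖` uniformly in `ε > 0`, and then `ε → 0`. -/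
lemma norm_le_integral_of_norm_complexLaplace_le {P : ℝ → ℝ} {t : ℝ}
    (hφ : ∀ z : ℂ, 0 < z.re → IntegrableOn (fun t : ℝ => Complex.exp (-z * t) * φ t) (Set.Ioi 0))
    (hcont : ContinuousOn φ (Set.Ioi 0)) (hP : Integrable P)
    (hle : ∀ ε : ℝ, 0 < ε → ∀ᵐ ω : ℝ, ‖complexLaplace φ (ε + 2 * Real.pi * ω * Complex.I)‖ ≤ P ω)
    (ht : 0 < t) : ‖φ t‖ ≤ ∫ ω, P ω := by
  have hdamped (ε : ℝ) (hε : 0 < ε) : Real.exp (-ε * t) * ‖φ t‖ ≤ ∫ ω, P ω := by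
    set y : ℝ → ℂ := fun t => Complex.exp (-(ε : ℂ) * t) * φ t with hy
    have hyt : ‖(Set.Ioi 0).indicator y t‖ ≤ ∫ ω, P ω := by
      refine norm_le_integral_of_norm_fourier_le
        ((integrable_indicator_iff measurableSet_Ioi).2 (hφ ε (by simpa))) hP ?_ ?_
      · have hφt := hcont.continuousAt (Ioi_mem_nhds ht)
        refine ContinuousAt.congr (f := y) (by fun_prop) ?_
        filter_upwards [Ioi_mem_nhds ht] with s hs using (Set.indicator_of_mem hs y).symm
      · simpa only [hy, fourier_indicator_exp_mul] using hle ε hε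
    rwa [Set.indicator_of_mem (Set.mem_Ioi.2 ht), norm_mul, norm_exp_neg_mul_ofReal,
      Complex.ofReal_re] at hyt
  have hlim : Tendsto (fun ε : ℝ => Real.exp (-ε * t) * ‖φ t‖) (nhdsWithin 0 (Set.Ioi 0))
      (nhds (Real.exp (-0 * t) * ‖φ t‖)) :=
    (Continuous.tendsto (by fun_prop) 0).mono_left nhdsWithin_le_nhds
  simpa using le_of_tendsto hlim (eventually_mem_nhdsWithin.mono hdamped)

lemma integrableOn_exp_mul_of_re_pos
    (hφ : ∀ s : ℝ, 0 < s → IntegrableOn (fun t : ℝ => Complex.exp (-(s : ℂ) * t) * φ t) (Set.Ioi 0))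
    (hz : 0 < z.re) :
    IntegrableOn (fun t : ℝ => Complex.exp (-z * t) * φ t) (Set.Ioi 0) := by
  have hrotate (t : ℝ) : Complex.exp (-z * t) * φ t =
      Complex.exp (-(z.im * Complex.I) * t) * (Complex.exp (-(z.re : ℂ) * t) * φ t) := by
    rw [← mul_assoc, ← Complex.exp_add]
    congr 2
    linear_combination (-t : ℂ) * (Complex.re_add_im z).symm
  simp only [hrotate]
  refine (hφ z.re hz).bdd_mul (c := 1) (Continuous.aestronglyMeasurable (by fun_prop))
    (ae_of_all _ fun t => ?_)
  rw [norm_exp_neg_mul_ofReal]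
  simp

lemma norm_exp_mul_id_mul_le {w : ℂ} {δ t : ℝ} (hδ : 0 < δ) (hw : 2 * δ ≤ w.re) (ht : 0 ≤ t)
    (c : ℂ) :
    ‖Complex.exp (-w * t) * (-t * c)‖ ≤ δ⁻¹ * ‖Complex.exp (-(δ : ℂ) * t) * c‖ := by
  have ht_exp : t ≤ δ⁻¹ * Real.exp (δ * t) := by
    rw [inv_mul_eq_div, le_div_iff₀ hδ]
    linarith [Real.add_one_le_exp (δ * t)]
  simp only [norm_mul, norm_neg, norm_exp_neg_mul_ofReal, Complex.norm_real,
    Real.norm_of_nonneg ht, Complex.ofReal_re]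
  calc Real.exp (-w.re * t) * (t * ‖c‖)
      ≤ Real.exp (-(2 * δ) * t) * (δ⁻¹ * Real.exp (δ * t) * ‖c‖) := by gcongr
    _ = δ⁻¹ * (Real.exp (-δ * t) * ‖c‖) := by
        rw [show -δ * t = -(2 * δ) * t + δ * t by ring, Real.exp_add]
        ring

lemma hasDerivAt_complexLaplace
    (hφ : ∀ z : ℂ, 0 < z.re → IntegrableOn (fun t : ℝ => Complex.exp (-z * t) * φ t) (Set.Ioi 0))
    (hz : 0 < z.re) :
    IntegrableOn (fun t : ℝ => Complex.exp (-z * t) * (-t * φ t)) (Set.Ioi 0) ∧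
      HasDerivAt (complexLaplace φ) (complexLaplace (fun t => -t * φ t) z) z := by
  have hδ : 0 < z.re / 4 := by positivity
  have hnhds : {w : ℂ | z.re / 2 < w.re} ∈ nhds z :=
    (isOpen_lt continuous_const Complex.continuous_re).mem_nhds (half_lt_self hz)
  refine hasDerivAt_integral_of_dominated_loc_of_deriv_le (μ := volume.restrict (Set.Ioi 0))
    (F := fun z t => Complex.exp (-z * t) * φ t)
    (F' := fun z t => Complex.exp (-z * t) * (-t * φ t)) hnhds
    (bound := fun t : ℝ => (z.re / 4)⁻¹ * ‖Complex.exp (-((z.re / 4 : ℝ) : ℂ) * t) * φ t‖)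
    ?_ (hφ z hz) ?_ ?_ ((hφ _ (by simpa)).norm.const_mul _) ?_
  · filter_upwards [hnhds] with w hw
    exact (hφ w ((half_pos hz).trans hw)).aestronglyMeasurable
  · simp only [mul_left_comm _ (-_ : ℂ)]
    exact (Continuous.aestronglyMeasurable (by fun_prop)).mul (hφ z hz).aestronglyMeasurable
  · filter_upwards [ae_restrict_mem measurableSet_Ioi] with t ht w hw
    exact norm_exp_mul_id_mul_le hδ (by linarith [show z.re / 2 < w.re from hw]) (le_of_lt ht) _
  · refine ae_of_all _ fun t w _ => ?_
    refine (((hasDerivAt_id w).neg.mul_const (t : ℂ)).cexp.mul_const (φ t)).congr_deriv ?_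
    simp only [Pi.neg_apply, id]
    ring

end ComplexLaplace

lemma eqOn_re_pos_of_eventually_eq_ofReal {F G : ℂ → ℂ}
    (hF : DifferentiableOn ℂ F {z | 0 < z.re}) (hG : DifferentiableOn ℂ G {z | 0 < z.re})
    (hFG : ∀ᶠ s : ℝ in atTop, F s = G s) : Set.EqOn F G {z | 0 < z.re} := by
  have hopen : IsOpen {z : ℂ | 0 < z.re} := isOpen_lt continuous_const Complex.continuous_re
  obtain ⟨S, hS⟩ := (hFG.and (eventually_gt_atTop 0)).exists_forall_of_atTop
  have hpos : 0 < S + 1 := (hS (S + 1) (by linarith)).2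
  refine (hF.analyticOnNhd hopen).eqOn_of_preconnected_of_frequently_eq (hG.analyticOnNhd hopen)
    (convex_halfSpace_re_gt 0).isPreconnected (z₀ := ((S + 1 : ℝ) : ℂ)) hpos ?_
  have hreal : Tendsto (fun s : ℝ => (s : ℂ)) (nhdsWithin (S + 1) {S + 1}ᶜ)
      (nhdsWithin ((S + 1 : ℝ) : ℂ) {((S + 1 : ℝ) : ℂ)}ᶜ) := by
    refine Complex.continuous_ofReal.continuousWithinAt.tendsto_nhdsWithin fun s hs => ?_
    simpa only [Set.mem_compl_iff, Set.mem_singleton_iff, Complex.ofReal_inj] using hs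
  have hge : ∀ᶠ s in nhdsWithin (S + 1) {S + 1}ᶜ, S ≤ s :=
    nhdsWithin_le_nhds (eventually_ge_nhds (lt_add_one S))
  exact hreal.frequently (hge.mono fun s hs => (hS s hs).1).frequently

/-! ### Decay of the Mittag-Leffler kernel -/

section Decay

variable {a α γ μ : ℝ} {z : ℂ}

/-- Since `|arg (z ^ α)| ≤ απ/2 < π`, the power `z ^ α` stays in a sector avoiding the negative
axis. -/
lemma exists_mul_norm_rpow_add_le_norm_cpow_add (ha : 0 ≤ a) (hα₀ : 0 ≤ α) (hα₂ : α < 2) :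
    ∃ c > 0, ∀ z : ℂ, 0 ≤ z.re → c * (‖z‖ ^ α + a) ≤ ‖z ^ (α : ℂ) + a‖ := by
  set k := Real.cos (α * (Real.pi / 2))
  have hk : -1 < k := by
    rw [← Real.cos_pi]
    exact Real.cos_lt_cos_of_nonneg_of_le_pi (by positivity) le_rfl (by nlinarith [Real.pi_pos])
  refine ⟨√((1 + k) / 2), Real.sqrt_pos.2 (by linarith), fun z hz => ?_⟩
  have hρ : 0 ≤ ‖z‖ ^ α := by positivity
  rw [Complex.cpow_ofReal]
  set ρ := ‖z‖ ^ α
  set θ := z.arg * α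
  have hcos : k ≤ Real.cos θ := by
    have harg : |z.arg| ≤ Real.pi / 2 := Complex.abs_arg_le_pi_div_two_iff.2 hz
    rw [← Real.cos_abs θ, abs_mul, abs_of_nonneg hα₀, mul_comm]
    exact Real.cos_le_cos_of_nonneg_of_le_pi (by positivity) (by nlinarith [Real.pi_pos])
      (by gcongr)
  have hnorm : ‖(ρ : ℂ) * (Real.cos θ + Real.sin θ * Complex.I) + a‖ ^ 2 =
      ρ ^ 2 + 2 * (a * ρ) * Real.cos θ + a ^ 2 := by
    rw [← Complex.normSq_eq_norm_sq, Complex.normSq_apply]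
    simp only [Complex.add_re, Complex.mul_re, Complex.ofReal_re, Complex.ofReal_im, Complex.I_re,
      Complex.I_im, Complex.add_im, Complex.mul_im]
    linear_combination ρ ^ 2 * Real.sin_sq_add_cos_sq θ
  refine le_of_sq_le_sq ?_ (norm_nonneg _)
  rw [hnorm, mul_pow, Real.sq_sqrt (by linarith)]
  calc (1 + k) / 2 * (ρ + a) ^ 2
      ≤ (1 + k) / 2 * (ρ + a) ^ 2 + (1 - k) / 2 * (ρ - a) ^ 2 :=
        le_add_of_nonneg_right <| mul_nonneg (by linarith [Real.cos_le_one (α * (Real.pi / 2))])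
          (sq_nonneg _)
    _ = ρ ^ 2 + 2 * (a * ρ) * k + a ^ 2 := by ring
    _ ≤ ρ ^ 2 + 2 * (a * ρ) * Real.cos θ + a ^ 2 := by gcongr

lemma cpow_add_ne_zero (ha : 0 < a) (hα₀ : 0 ≤ α) (hα₂ : α < 2) (hz : 0 ≤ z.re) :
    z ^ (α : ℂ) + a ≠ 0 := by
  obtain ⟨c, hc, hle⟩ := exists_mul_norm_rpow_add_le_norm_cpow_add ha.le hα₀ hα₂
  have hpos : 0 < c * (‖z‖ ^ α + a) := by positivity
  exact norm_pos_iff.1 (hpos.trans_le (hle z hz))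

/-- For `μ = α - γ`, the Laplace transform of `g_γ - a k_γ`, in which the singularities `z ^ (-γ)`
of the transforms of `g_γ` and `a k_γ` have cancelled. -/
noncomputable def mlSymbol (a α μ : ℝ) (z : ℂ) : ℂ := z ^ (μ : ℂ) / (z ^ (α : ℂ) + a)

lemma hasDerivAt_mlSymbol (μ : ℝ) (ha : 0 < a) (hα₀ : 0 ≤ α) (hα₂ : α < 2) (hz : 0 < z.re) :
    HasDerivAt (mlSymbol a α μ)
      (((μ * z ^ (μ - 1 : ℂ)) * (z ^ (α : ℂ) + a) - z ^ (μ : ℂ) * (α * z ^ (α - 1 : ℂ))) /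
        (z ^ (α : ℂ) + a) ^ 2) z := by
  have hslit : z ∈ Complex.slitPlane := Or.inl hz
  refine HasDerivAt.congr_deriv (((hasDerivAt_id z).cpow_const hslit).div
    (((hasDerivAt_id z).cpow_const hslit).add_const (a : ℂ))
    (cpow_add_ne_zero ha hα₀ hα₂ hz.le)) ?_
  simp only [id, mul_one]

lemma exists_norm_deriv_mlSymbol_le (μ : ℝ) (ha : 0 < a) (hα₀ : 0 ≤ α) (hα₂ : α < 2) :
    ∃ C ≥ 0, ∀ z : ℂ, 0 < z.re →
      ‖deriv (mlSymbol a α μ) z‖ ≤ C * (‖z‖ ^ (μ - 1) / (‖z‖ ^ α + a)) := by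
  obtain ⟨c, hc, hle⟩ := exists_mul_norm_rpow_add_le_norm_cpow_add ha.le hα₀ hα₂
  refine ⟨|μ| / c + α / c ^ 2, by positivity, fun z hz => ?_⟩
  have hz₀ : 0 < ‖z‖ := norm_pos_iff.2 fun h => by simp [h] at hz
  have hcpow (r : ℝ) : ‖z ^ (r - 1 : ℂ)‖ = ‖z‖ ^ (r - 1) := by
    exact_mod_cast Complex.norm_cpow_real z (r - 1)
  have hmul : ‖z ^ (μ : ℂ)‖ * (α * ‖z‖ ^ (α - 1)) = α * (‖z‖ ^ (μ - 1) * ‖z‖ ^ α) := by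
    rw [Complex.norm_cpow_real, Real.rpow_sub_one hz₀.ne', Real.rpow_sub_one hz₀.ne']
    ring
  have hden : 0 < c * (‖z‖ ^ α + a) := by positivity
  have hD := hden.trans_le (hle z hz.le)
  rw [(hasDerivAt_mlSymbol μ ha hα₀ hα₂ hz).deriv, sub_div, sq, mul_div_mul_right _ _
    (norm_pos_iff.1 hD), ← sq]
  calc _ ≤ |μ| * ‖z‖ ^ (μ - 1) / ‖z ^ (α : ℂ) + a‖ +
        α * (‖z‖ ^ (μ - 1) * ‖z‖ ^ α) / ‖z ^ (α : ℂ) + a‖ ^ 2 := by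
        refine (norm_sub_le _ _).trans_eq ?_
        simp only [norm_div, norm_mul, norm_pow, hcpow, Complex.norm_real, Real.norm_eq_abs,
          abs_of_nonneg hα₀, hmul]
    _ ≤ |μ| * ‖z‖ ^ (μ - 1) / (c * (‖z‖ ^ α + a)) +
        α * (‖z‖ ^ (μ - 1) * (‖z‖ ^ α + a)) / (c * (‖z‖ ^ α + a)) ^ 2 := by
        gcongr
        exacts [hle z hz.le, le_add_of_nonneg_right ha.le, hle z hz.le]
    _ = _ := by field_simp

lemma integrable_comp_abs {f : ℝ → ℝ} (hf : IntegrableOn f (Set.Ioi 0)) :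
    Integrable fun x => f |x| := by
  have hpos : IntegrableOn (fun x => f |x|) (Set.Ioi 0) :=
    hf.congr_fun (fun x hx => by simp only [abs_of_pos (Set.mem_Ioi.1 hx)]) measurableSet_Ioi
  have hneg : IntegrableOn (fun x => f |x|) (Set.Iio 0) := by
    simpa only [abs_neg, neg_zero] using
      IntegrableOn.comp_neg_Iio (c := 0) (f := fun x => f |x|) (by simpa using hpos)
  have hunion := (hneg.congr_set_ae Iio_ae_eq_Iic.symm).union hpos
  rwa [Set.Iic_union_Ioi, integrableOn_univ] at hunion

lemma integrableOn_rpow_div_rpow_add (ha : 0 < a) (hμ : 0 < μ) (hμα : μ < α) :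
    IntegrableOn (fun x : ℝ => x ^ (μ - 1) / (x ^ α + a)) (Set.Ioi 0) := by
  have hmeas (s : Set ℝ) : AEStronglyMeasurable (fun x : ℝ => x ^ (μ - 1) / (x ^ α + a))
      (volume.restrict s) := Measurable.aestronglyMeasurable (by fun_prop)
  rw [← Set.Ioc_union_Ioi_eq_Ioi (zero_le_one (α := ℝ))]
  refine IntegrableOn.union ?_ ?_
  · have hnear : IntegrableOn (fun x : ℝ => x ^ (μ - 1) / a) (Set.Ioc 0 1) :=
      ((intervalIntegrable_iff_integrableOn_Ioc_of_le zero_le_one).1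
        (intervalIntegral.intervalIntegrable_rpow' (by linarith))).div_const a
    refine hnear.mono' (hmeas _) ((ae_restrict_mem measurableSet_Ioc).mono fun x hx => ?_)
    have hx₀ : 0 < x := hx.1
    rw [Real.norm_of_nonneg (by positivity)]
    gcongr
    exact le_add_of_nonneg_left (by positivity)
  · have hfar : IntegrableOn (fun x : ℝ => x ^ (μ - 1 - α)) (Set.Ioi 1) :=
      integrableOn_Ioi_rpow_of_lt (by linarith) one_pos
    refine hfar.mono' (hmeas _) ((ae_restrict_mem measurableSet_Ioi).mono fun x hx => ?_)
    have hx₀ : 0 < x := one_pos.trans hx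
    rw [Real.norm_of_nonneg (by positivity), Real.rpow_sub hx₀ (μ - 1)]
    gcongr
    exact le_add_of_nonneg_right ha.le

lemma integrableOn_exp_mul_rlKernel_sub_mul_mlKernel (ha : 0 ≤ a) (hα₁ : 1 ≤ α) (hα₂ : α ≤ 2)
    (hγ : α / 2 ≤ γ) (hz : 0 < z.re) :
    IntegrableOn (fun t : ℝ => Complex.exp (-z * t) *
      ((rlKernel γ t - a * mlKernel a α γ t : ℝ) : ℂ)) (Set.Ioi 0) := by
  refine integrableOn_exp_mul_of_re_pos (fun s hs => ?_) hz
  have hγ₀ : 0 < γ := by linarith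
  have hm : ContinuousOn (fun t => rlKernel γ t - a * mlKernel a α γ t) (Set.Ioi 0) :=
    (continuousOn_rlKernel γ).sub
      ((continuous_mlKernel a hα₁ hγ₀.le).const_mul a).continuousOn
  refine (hasLaplaceTransform_rlKernel hγ₀ hs).1.mono'
    (ContinuousOn.aestronglyMeasurable (by fun_prop) measurableSet_Ioi)
    ((ae_restrict_mem measurableSet_Ioi).mono fun t ht => ?_)
  rw [norm_mul, norm_exp_neg_mul_ofReal, Complex.ofReal_re, Complex.norm_real]
  gcongr
  exact abs_rlKernel_sub_mul_mlKernel_le ha hα₁ hα₂ hγ ht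

lemma complexLaplace_ofReal {φ : ℝ → ℝ} {s L : ℝ} (hφ : HasLaplaceTransform φ s L) :
    complexLaplace (fun t => (φ t : ℂ)) s = L := by
  rw [complexLaplace, ← hφ.2, ← integral_complex_ofReal]
  push_cast
  rfl

lemma complexLaplace_rlKernel_sub_mul_mlKernel (ha : 0 < a) (hα₁ : 1 ≤ α) (hα₂ : α < 2)
    (hγ : α / 2 ≤ γ) :
    Set.EqOn (complexLaplace fun t => ((rlKernel γ t - a * mlKernel a α γ t : ℝ) : ℂ))
      (mlSymbol a α (α - γ)) {z | 0 < z.re} := by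
  have hα₀ : 0 ≤ α := by linarith
  have hγ₀ : 0 < γ := by linarith
  refine eqOn_re_pos_of_eventually_eq_ofReal
    (fun z hz => (hasDerivAt_complexLaplace (fun w hw =>
      integrableOn_exp_mul_rlKernel_sub_mul_mlKernel ha.le hα₁ hα₂.le hγ hw)
        hz).2.differentiableAt.differentiableWithinAt)
    (fun z hz => (hasDerivAt_mlSymbol _ ha hα₀ hα₂ hz).differentiableAt.differentiableWithinAt) ?_
  filter_upwards [eventually_gt_atTop 0, eventually_abs_lt_rpow a (by linarith : 0 < α)]
    with s hs hsa
  have hlaplace := (hasLaplaceTransform_rlKernel hγ₀ hs).sub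
    ((hasLaplaceTransform_mlKernel hα₁ hγ₀.le hs hsa).const_mul a)
  rw [complexLaplace_ofReal hlaplace, mlSymbol, ← Complex.ofReal_cpow hs.le,
    ← Complex.ofReal_cpow hs.le, sub_eq_add_neg α γ, Real.rpow_add hs]
  norm_cast
  have : 0 < s ^ α := by positivity
  field_simp
  ring

/-- The Laplace transform of `-t (g_γ - a k_γ)` is the derivative of the symbol, which on every
line `re z = ε > 0` is dominated by one integrable function of `im z`. -/
lemma exists_abs_rlKernel_sub_mul_mlKernel_le_div (ha : 0 < a) (hα₁ : 1 ≤ α) (hα₂ : α < 2)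
    (hγ : α / 2 ≤ γ) (hγα : γ < α) :
    ∃ C, ∀ t > 0, |rlKernel γ t - a * mlKernel a α γ t| ≤ C / t := by
  obtain ⟨C, hC, hbound⟩ := exists_norm_deriv_mlSymbol_le (α - γ) ha (by linarith) hα₂
  have hprofile : Integrable fun ω : ℝ => |ω| ^ (α - γ - 1) / (|ω| ^ α + a) :=
    integrable_comp_abs (integrableOn_rpow_div_rpow_add ha (sub_pos.2 hγα) (by linarith))
  have hm (z : ℂ) (hz : 0 < z.re) := hasDerivAt_complexLaplace
    (fun w hw => integrableOn_exp_mul_rlKernel_sub_mul_mlKernel ha.le hα₁ hα₂.le hγ hw) hz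
  have hcont : ContinuousOn (fun t : ℝ => -t * ((rlKernel γ t - a * mlKernel a α γ t : ℝ) : ℂ))
      (Set.Ioi 0) := by
    have := continuousOn_rlKernel γ
    have := continuous_mlKernel a hα₁ (by linarith : 0 ≤ γ)
    fun_prop
  have hle (ε : ℝ) (hε : 0 < ε) : ∀ᵐ ω : ℝ, ‖complexLaplace
      (fun t => -t * ((rlKernel γ t - a * mlKernel a α γ t : ℝ) : ℂ))
        (ε + 2 * Real.pi * ω * Complex.I)‖ ≤ C * (|ω| ^ (α - γ - 1) / (|ω| ^ α + a)) := by
    filter_upwards [compl_mem_ae_iff.2 (measure_singleton (0 : ℝ))] with ω hω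
    have hω₀ : 0 < |ω| := abs_pos.2 hω
    set z : ℂ := ε + 2 * Real.pi * ω * Complex.I
    have hz : 0 < z.re := by simpa [z]
    have hωz : |ω| ≤ ‖z‖ := by
      refine le_trans ?_ (Complex.abs_im_le_norm z)
      rw [show z.im = 2 * Real.pi * ω by simp [z], abs_mul,
        abs_of_pos (by positivity : 0 < 2 * Real.pi)]
      nlinarith [Real.pi_gt_three]
    have hsymbol := (complexLaplace_rlKernel_sub_mul_mlKernel ha hα₁ hα₂ hγ).eventuallyEq_of_mem
      ((isOpen_lt continuous_const Complex.continuous_re).mem_nhds hz)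
    rw [← (hm z hz).2.deriv, hsymbol.deriv_eq]
    refine (hbound z hz).trans ?_
    have hpow := Real.rpow_le_rpow_of_nonpos hω₀ hωz (by linarith : α - γ - 1 ≤ 0)
    gcongr
  refine ⟨∫ ω : ℝ, C * (|ω| ^ (α - γ - 1) / (|ω| ^ α + a)), fun t ht => ?_⟩
  have htm := norm_le_integral_of_norm_complexLaplace_le (fun z hz => (hm z hz).1) hcont
    (hprofile.const_mul C) hle ht
  rwa [norm_mul, norm_neg, Complex.norm_real, Complex.norm_real, Real.norm_of_nonneg ht.le,
    Real.norm_eq_abs, ← le_div_iff₀' ht] at htm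

end Decay

/-! ### From the Caputo equation to a Volterra equation -/

section Caputo

variable {a α γ σ t B : ℝ} {f u v w φ ψ : ℝ → ℝ}

lemma hasDerivAt_integral_of_continuousOn_Ici (hφ : ContinuousOn φ (Set.Ici 0)) (ht : 0 < t) :
    HasDerivAt (fun t => ∫ s in 0..t, φ s) (φ t) t :=
  intervalIntegral.integral_hasDerivAt_right
    ((hφ.mono (by rw [Set.uIcc_of_le ht.le]; exact Set.Icc_subset_Ici_self)).intervalIntegrable)
    ((hφ.mono Set.Ioi_subset_Ici_self).stronglyMeasurableAtFilter isOpen_Ioi t ht)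
    (hφ.continuousAt (Ici_mem_nhds ht))

lemma eqOn_Ioi_of_integral_eq (hφ : ContinuousOn φ (Set.Ici 0)) (hψ : ContinuousOn ψ (Set.Ici 0))
    (h : ∀ t > 0, ∫ s in 0..t, φ s = ∫ s in 0..t, ψ s) : Set.EqOn φ ψ (Set.Ioi 0) := by
  intro t ht
  refine (hasDerivAt_integral_of_continuousOn_Ici hφ ht).unique
    ((hasDerivAt_integral_of_continuousOn_Ici hψ ht).congr_of_eventuallyEq ?_)
  filter_upwards [Ioi_mem_nhds ht] with s hs using h s hs

lemma abs_causalConv_rlKernel_le (hσ : 0 < σ) (ht : 0 < t) (hu : ∀ s ∈ Set.Ioc 0 t, |u s| ≤ B) :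
    |causalConv (rlKernel σ) u t| ≤ B * rlKernel (σ + 1) t := by
  calc |causalConv (rlKernel σ) u t| ≤ ∫ s in 0..t, B * (rlKernel σ (t - s) * rlKernel 1 s) := by
        simp only [rlKernel_one, mul_one]
        rw [← Real.norm_eq_abs, causalConv]
        refine intervalIntegral.norm_integral_le_of_norm_le ht.le (ae_of_all _ fun s hs => ?_)
          ((intervalIntegrable_rlKernel_sub_left hσ t).const_mul B)
        have hnonneg := rlKernel_nonneg hσ (sub_nonneg.2 hs.2)
        rw [norm_mul, Real.norm_of_nonneg hnonneg, mul_comm B]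
        exact mul_le_mul_of_nonneg_left (hu s hs) hnonneg
    _ = B * rlKernel (σ + 1) t := by
        rw [intervalIntegral.integral_const_mul, ← causalConv,
          causalConv_rlKernel_rlKernel hσ one_pos ht]

lemma hasDerivWithinAt_causalConv_rlKernel_zero (hσ : 0 < σ) (hu : HasDerivAt u 0 0)
    (hu₀ : u 0 = 0) : HasDerivWithinAt (causalConv (rlKernel σ) u) 0 (Set.Ici 0) 0 := by
  rw [← hasDerivWithinAt_Ioi_iff_Ici, hasDerivWithinAt_iff_tendsto_slope' Set.self_notMem_Ioi]
  have hkernel : Tendsto (rlKernel (σ + 1)) (nhdsWithin 0 (Set.Ioi 0)) (nhds 0) := by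
    have hcont := (continuous_rlKernel (by linarith : 1 ≤ σ + 1)).tendsto 0
    rw [show rlKernel (σ + 1) 0 = 0 by simp [rlKernel, hσ.ne']] at hcont
    exact hcont.mono_left nhdsWithin_le_nhds
  have hsmall : ∀ᶠ s in nhds 0, |u s| ≤ |s| := by
    simpa [hu₀] using (hasDerivAt_iff_isLittleO.1 hu).bound one_pos
  obtain ⟨δ, hδ, hball⟩ := Metric.eventually_nhds_iff.1 hsmall
  refine squeeze_zero_norm' ?_ hkernel
  filter_upwards [Ioo_mem_nhdsGT hδ] with t ht
  rw [slope_def_field, causalConv_zero_right, sub_zero, sub_zero, norm_div,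
    Real.norm_of_nonneg ht.1.le, div_le_iff₀' ht.1]
  refine abs_causalConv_rlKernel_le hσ ht.1 fun s hs => ?_
  refine (hball ?_).trans ?_
  · rw [Real.dist_0_eq_abs, abs_of_pos hs.1]
    exact hs.2.trans_lt ht.2
  · rw [abs_of_pos hs.1]
    exact hs.2

lemma AC2On.eq_add_causalConv (hv : AC2On v t) (ht : 0 ≤ t) :
    v t = v 0 + deriv v 0 * t + causalConv (rlKernel 2) (deriv (deriv v)) t := by
  obtain ⟨hdiff, hint, hderiv⟩ := hv
  have hprim (s : ℝ) :
      causalConv (rlKernel 1) (deriv (deriv v)) s = ∫ x in 0..s, deriv (deriv v) x := by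
    simp only [causalConv, rlKernel_one, one_mul]
  have hcont : ContinuousOn (causalConv (rlKernel 1) (deriv (deriv v))) (Set.uIcc 0 t) :=
    (intervalIntegral.continuousOn_primitive_interval' hint Set.left_mem_uIcc).congr
      fun s _ => hprim s
  rw [← Set.uIcc_of_le ht] at hdiff hderiv
  have hderiv' : Set.EqOn (deriv v)
      (fun s => deriv v 0 + causalConv (rlKernel 1) (deriv (deriv v)) s) (Set.uIcc 0 t) :=
    fun s hs => by simp only [hprim, hderiv s hs]
  have hftc := intervalIntegral.integral_eq_sub_of_hasDerivAt
    (fun s hs => (hdiff s hs).hasDerivAt)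
    ((continuousOn_const.add hcont).congr hderiv').intervalIntegrable
  rw [intervalIntegral.integral_congr hderiv', intervalIntegral.integral_add (by simp)
    hcont.intervalIntegrable, intervalIntegral.integral_const] at hftc
  have htwice := causalConv_rlKernel_causalConv_rlKernel one_pos one_pos (by norm_num) ht hint
  rw [one_add_one_eq_two, causalConv] at htwice
  simp only [rlKernel_one, one_mul] at htwice hftc
  simp only [smul_eq_mul, sub_zero] at hftc
  rw [← htwice]
  linarith

lemma capKernel_eq_causalConv (hα : α ≠ 2) (hw' : deriv w 0 = 0) :
    capKernel α w = causalConv (rlKernel (2 - α)) fun s => w s - w 0 := by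
  ext t
  simp only [capKernel, if_neg hα, rlInt_eq_causalConv, hw', zero_mul, sub_zero]

/-- Convolving `g_{2-α} * (w - w 0) = g_2 * D^α w` with `g_{α-1}` gives
`g_1 * (w - w 0) = g_1 * (g_α * D^α w)`. -/
lemma sub_eq_causalConv_caputoD (hα₁ : 1 < α) (hα₂ : α < 2) (hw : Continuous w)
    (hw' : HasDerivAt w 0 0) (hAC : ∀ T > 0, AC2On (capKernel α w) T) (ht : 0 < t) :
    w t - w 0 = causalConv (rlKernel α) (caputoD α w) t := by
  have hu : Continuous fun s => w s - w 0 := by fun_prop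
  have hcap := capKernel_eq_causalConv hα₂.ne hw'.deriv
  have hcap₀ : capKernel α w 0 = 0 := by rw [hcap, causalConv_zero_right]
  have hcap' : deriv (capKernel α w) 0 = 0 := by
    have hdiff := (hAC 1 one_pos).1 0 ⟨le_rfl, zero_le_one⟩
    refine (uniqueDiffWithinAt_Ici 0).eq_deriv _ hdiff.hasDerivAt.hasDerivWithinAt ?_
    rw [hcap]
    exact hasDerivWithinAt_causalConv_rlKernel_zero (by linarith) (hw'.sub_const _) (sub_self _)
  have hD (T : ℝ) (hT : 0 < T) : IntervalIntegrable (caputoD α w) volume 0 T := (hAC T hT).2.1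
  have htaylor (s : ℝ) (hs : 0 < s) : causalConv (rlKernel (2 - α)) (fun s => w s - w 0) s =
      causalConv (rlKernel 2) (caputoD α w) s := by
    have hs' := (hAC s hs).eq_add_causalConv hs.le
    rw [hcap₀, hcap', zero_mul, zero_add, zero_add] at hs'
    rwa [← hcap]
  refine eqOn_Ioi_of_integral_eq hu.continuousOn
    (continuousOn_causalConv (continuous_rlKernel hα₁.le) hD) (fun s hs => ?_) ht
  have hleft := causalConv_rlKernel_causalConv_rlKernel (σ := α - 1) (τ := 2 - α) (by linarith)
    (by linarith) (by linarith) hs.le (hu.intervalIntegrable 0 s)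
  rw [causalConv_congr hs.le (fun _ _ => rfl) fun x hx => htaylor x hx.1,
    causalConv_rlKernel_causalConv_rlKernel (by linarith) two_pos (by linarith) hs.le (hD s hs),
    show α - 1 + 2 = 1 + α by ring, ← causalConv_rlKernel_causalConv_rlKernel one_pos
      (by linarith) (by linarith) hs.le (hD s hs), show α - 1 + (2 - α) = 1 by ring] at hleft
  simpa only [causalConv, rlKernel_one, one_mul] using hleft.symm

lemma add_causalConv_eq_of_caputoD_add_eq (hγ : 0 < γ) (hα₁ : 1 < α) (hα₂ : α < 2)
    (hf : ∀ T > 0, IntervalIntegrable f volume 0 T) (hw : Continuous w) (hw' : HasDerivAt w 0 0)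
    (hAC : ∀ T > 0, AC2On (capKernel α w) T)
    (heq : ∀ᵐ t ∂volume.restrict (Set.Ici 0), caputoD α w t + a * w t = rlInt γ f t)
    (ht : 0 < t) :
    w t + a * causalConv (rlKernel α) w t = w 0 + causalConv (rlKernel (α + γ)) f t := by
  have hα₀ : 0 < α := by linarith
  have hconv : causalConv (rlKernel α) (fun s => caputoD α w s + a * w s) t =
      causalConv (rlKernel (α + γ)) f t := by
    rw [causalConv_congr_ae ht.le heq, funext (rlInt_eq_causalConv γ f),
      causalConv_rlKernel_causalConv_rlKernel hα₀ hγ (by linarith) ht.le (hf t ht)]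
  have hD : IntervalIntegrable (caputoD α w) volume 0 t := (hAC t ht).2.1
  rw [causalConv_add_right (continuous_rlKernel hα₁.le) hD
    ((hw.const_mul a).intervalIntegrable 0 t), causalConv_const_mul_right,
    ← sub_eq_causalConv_caputoD hα₁ hα₂ hw hw' hAC ht] at hconv
  linarith

end Caputo

/-! ### Variation of constants -/

section VariationOfConstants

variable {a α γ δ t w₀ : ℝ} {f h w : ℝ → ℝ}

lemma causalConv_mlKernel_causalConv_rlKernel (a : ℝ) (hα : 1 ≤ α) (hγ : 0 ≤ γ) (hδ : 1 ≤ δ)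
    (ht : 0 ≤ t) (hf : IntervalIntegrable f volume 0 t) :
    causalConv (mlKernel a α γ) (causalConv (rlKernel δ) f) t =
      causalConv (mlKernel a α (γ + δ)) f t := by
  rw [causalConv_assoc_of_continuous ht (continuous_mlKernel a hα hγ) (continuous_rlKernel hδ) hf]
  refine causalConv_congr ht (fun x hx => ?_) fun _ _ => rfl
  rw [causalConv_comm, causalConv_rlKernel_mlKernel a hα hγ (by linarith) hx.1]

lemma causalConv_mlKernel_add_mul_causalConv_mlKernel (a : ℝ) (hα : 1 ≤ α) (hγ : 0 ≤ γ)
    (ht : 0 ≤ t) (hf : IntervalIntegrable f volume 0 t) :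
    causalConv (mlKernel a α γ) f t + a * causalConv (mlKernel a α (γ + α)) f t =
      causalConv (rlKernel (γ + α)) f t := by
  have hk := continuous_mlKernel a hα hγ
  have hk' := continuous_mlKernel a hα (by linarith : 0 ≤ γ + α)
  rw [← causalConv_const_mul_left, ← causalConv_add_left hk (hk'.const_mul a) hf]
  exact causalConv_congr ht (fun x hx => mlKernel_add_mul_mlKernel a hα hγ hx.1.le)
    fun _ _ => rfl

/-- `a k_0` is the resolvent of the kernel `a g_α`. -/
lemma eq_sub_causalConv_mlKernel_of_volterra (hα : 1 ≤ α) (hw : Continuous w)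
    (hvol : ∀ t > 0, w t + a * causalConv (rlKernel α) w t = h t) (ht : 0 < t) :
    w t = h t - a * causalConv (mlKernel a α 0) h t := by
  have hwt := hw.intervalIntegrable (μ := volume) 0 t
  have hgw : ContinuousOn (causalConv (rlKernel α) w) (Set.uIcc 0 t) :=
    (continuousOn_causalConv (continuous_rlKernel hα) fun T _ => hw.intervalIntegrable 0 T).mono
      (by rw [Set.uIcc_of_le ht.le]; exact Set.Icc_subset_Ici_self)
  have hresolvent : causalConv (mlKernel a α 0) h t = causalConv (rlKernel α) w t := by
    rw [← causalConv_congr ht.le (fun _ _ => rfl) fun s hs => hvol s hs.1,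
      causalConv_add_right (continuous_mlKernel a hα le_rfl) hwt
        (hgw.intervalIntegrable.const_mul a), causalConv_const_mul_right,
      causalConv_mlKernel_causalConv_rlKernel a hα le_rfl hα ht.le hwt,
      causalConv_mlKernel_add_mul_causalConv_mlKernel a hα le_rfl ht.le hwt, zero_add]
  rw [hresolvent, ← hvol t ht]
  ring

lemma eq_mul_add_causalConv_mlKernel_of_volterra (hα : 1 ≤ α) (hγ : 0 ≤ γ)
    (hf : ∀ T > 0, IntervalIntegrable f volume 0 T) (hw : Continuous w)
    (hvol : ∀ t > 0, w t + a * causalConv (rlKernel α) w t =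
      w₀ + causalConv (rlKernel (α + γ)) f t) (ht : 0 < t) :
    w t = w₀ * (1 - a * mlKernel a α 1 t) + causalConv (mlKernel a α γ) f t := by
  have hαγ : 1 ≤ α + γ := by linarith
  have hconst : causalConv (mlKernel a α 0) (fun _ => w₀) t = w₀ * mlKernel a α 1 t := by
    have hone := causalConv_rlKernel_mlKernel a hα le_rfl one_pos ht
    rw [zero_add, causalConv_comm, funext rlKernel_one] at hone
    rw [← hone, ← causalConv_const_mul_right]
    simp only [mul_one]
  have hgf : ContinuousOn (causalConv (rlKernel (α + γ)) f) (Set.uIcc 0 t) :=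
    (continuousOn_causalConv (continuous_rlKernel hαγ) hf).mono
      (by rw [Set.uIcc_of_le ht.le]; exact Set.Icc_subset_Ici_self)
  have hshift := causalConv_mlKernel_add_mul_causalConv_mlKernel a hα hγ ht.le (hf t ht)
  rw [eq_sub_causalConv_mlKernel_of_volterra hα hw hvol ht,
    causalConv_add_right (continuous_mlKernel a hα le_rfl) (by simp) hgf.intervalIntegrable,
    hconst, causalConv_mlKernel_causalConv_rlKernel a hα le_rfl hαγ ht.le (hf t ht), zero_add,
    add_comm α γ, ← hshift]
  ring

end VariationOfConstants

/-! ### Lower bounds -/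

section LowerBound

variable {a b c r p α γ M x t : ℝ} {K f w : ℝ → ℝ}

lemma two_rpow_neg_abs_mul_rpow_le (r : ℝ) (ht : 0 < t) (hx : x ∈ Set.Icc (t / 2) t) :
    2 ^ (-|r|) * t ^ r ≤ x ^ r := by
  have hx₀ : 0 < x := (half_pos ht).trans_le hx.1
  have hu : 2⁻¹ ≤ x / t := by
    rw [le_div_iff₀ ht]
    linarith [hx.1]
  calc 2 ^ (-|r|) * t ^ r = 2⁻¹ ^ |r| * t ^ r := by
        rw [Real.rpow_neg zero_le_two, Real.inv_rpow zero_le_two]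
    _ ≤ (x / t) ^ |r| * t ^ r := by gcongr
    _ ≤ (x / t) ^ r * t ^ r :=
        mul_le_mul_of_nonneg_right (Real.rpow_le_rpow_of_exponent_ge (by positivity)
          ((div_le_one ht).2 hx.2) (le_abs_self r)) (by positivity)
    _ = x ^ r := by rw [← Real.mul_rpow (by positivity) ht.le, div_mul_cancel₀ x ht.ne']

lemma mul_rpow_mul_integral_le_causalConv (hK : Continuous K) (hK₀ : ∀ x > 0, 0 ≤ K x)
    (hc : 0 ≤ c) (hKr : ∀ x ≥ t / 2, c * x ^ r ≤ K x) (hf : IntervalIntegrable f volume 0 t)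
    (hf₀ : ∀ᵐ s ∂volume.restrict (Set.Ici 0), 0 ≤ f s) (ht : 0 < t) (hM : M ∈ Set.Icc 0 (t / 2)) :
    c * (2 ^ (-|r|) * t ^ r) * ∫ s in 0..M, f s ≤ causalConv K f t := by
  have hMt : Set.Ioo 0 M ⊆ Set.Ioo 0 t := Set.Ioo_subset_Ioo_right (by linarith [hM.2])
  have hft := (intervalIntegrable_iff_integrableOn_Ioo_of_le ht.le).1 hf
  have hKf := (intervalIntegrable_iff_integrableOn_Ioo_of_le ht.le).1
    (intervalIntegrable_causalConv_integrand hK hf)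
  have hf_pos {T : ℝ} : ∀ᵐ s ∂volume.restrict (Set.Ioo 0 T), 0 ≤ f s :=
    ae_restrict_of_ae_restrict_of_subset (fun s hs => hs.1.le) hf₀
  rw [intervalIntegral.integral_of_le hM.1, integral_Ioc_eq_integral_Ioo, ← integral_const_mul,
    causalConv_eq_setIntegral_Ioo ht.le]
  calc ∫ s in Set.Ioo 0 M, c * (2 ^ (-|r|) * t ^ r) * f s
      ≤ ∫ s in Set.Ioo 0 M, K (t - s) * f s := by
        refine integral_mono_ae ((hft.mono_set hMt).const_mul _) (hKf.mono_set hMt) ?_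
        filter_upwards [hf_pos, ae_restrict_mem measurableSet_Ioo] with s hfs hs
        have hts : t - s ∈ Set.Icc (t / 2) t := ⟨by linarith [hs.2, hM.2], by linarith [hs.1]⟩
        have hpow := mul_le_mul_of_nonneg_left (two_rpow_neg_abs_mul_rpow_le r ht hts) hc
        exact mul_le_mul_of_nonneg_right (hpow.trans (hKr _ hts.1)) hfs
    _ ≤ ∫ s in Set.Ioo 0 t, K (t - s) * f s := by
        refine setIntegral_mono_set hKf ?_ hMt.eventuallyLE
        filter_upwards [hf_pos, ae_restrict_mem measurableSet_Ioo] with s hfs hs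
        exact mul_nonneg (hK₀ _ (sub_pos.2 hs.2)) hfs

lemma exists_eventually_mul_rpow_le_causalConv (hK : Continuous K) (hK₀ : ∀ x > 0, 0 ≤ K x)
    (hc : 0 < c) (hKr : ∀ᶠ x in atTop, c * x ^ r ≤ K x)
    (hf : ∀ T > 0, IntervalIntegrable f volume 0 T)
    (hf₀ : ∀ᵐ s ∂volume.restrict (Set.Ici 0), 0 ≤ f s) (hM : 0 ≤ M)
    (hpos : 0 < ∫ s in 0..M, f s) :
    ∃ δ > 0, ∀ᶠ t in atTop, δ * t ^ r ≤ causalConv K f t := by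
  obtain ⟨x₀, hx₀⟩ := eventually_atTop.1 hKr
  refine ⟨c * 2 ^ (-|r|) * ∫ s in 0..M, f s, by positivity, ?_⟩
  filter_upwards [eventually_gt_atTop 0, eventually_ge_atTop (2 * M), eventually_ge_atTop (2 * x₀)]
    with t ht htM htx
  refine le_of_eq_of_le (by ring) (mul_rpow_mul_integral_le_causalConv (r := r) hK hK₀ hc.le
    (fun x hx => hx₀ x ?_) (hf t ht) hf₀ ht ⟨hM, by linarith⟩)
  linarith

lemma exists_eventually_mul_rpow_le_mlKernel_of_lt (ha : 0 < a) (hα₁ : 1 ≤ α) (hα₂ : α < 2)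
    (hγ : α / 2 ≤ γ) (hγα : γ < α) :
    ∃ c > 0, ∀ᶠ x in atTop, c * x ^ (γ - 1) ≤ mlKernel a α γ x := by
  have hγ₀ : 0 < γ := by linarith
  have hG := Real.Gamma_pos_of_pos hγ₀
  obtain ⟨C, hdecay⟩ := exists_abs_rlKernel_sub_mul_mlKernel_le_div ha hα₁ hα₂ hγ hγα
  have hlim : Tendsto (fun x : ℝ => C * x ^ (-γ)) atTop (nhds 0) := by
    simpa using (tendsto_rpow_neg_atTop hγ₀).const_mul C
  refine ⟨((Real.Gamma γ)⁻¹ / 2) / a, by positivity, ?_⟩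
  filter_upwards [eventually_gt_atTop 0, hlim.eventually_le_const (half_pos (inv_pos.2 hG))]
    with x hx hsmall
  have hC : C / x = C * x ^ (-γ) * x ^ (γ - 1) := by
    rw [mul_assoc, ← Real.rpow_add hx, neg_add_eq_sub, sub_sub_cancel_left, Real.rpow_neg_one,
      div_eq_mul_inv]
  have hg : rlKernel γ x = (Real.Gamma γ)⁻¹ * x ^ (γ - 1) := div_eq_inv_mul _ _
  have hdiff := (le_abs_self _).trans (hdecay x hx)
  have hmain := mul_le_mul_of_nonneg_right hsmall (Real.rpow_nonneg hx.le (γ - 1))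
  rw [div_mul_eq_mul_div, div_le_iff₀' ha]
  linarith

lemma exists_eventually_mul_rpow_le_mlKernel (ha : 0 < a) (hα₁ : 1 ≤ α) (hα₂ : α < 2)
    (hγ : α / 2 ≤ γ) : ∃ c > 0, ∀ᶠ x in atTop, c * x ^ (γ - 1) ≤ mlKernel a α γ x := by
  rcases hγ.eq_or_lt with rfl | hγ
  · exact exists_eventually_mul_rpow_le_mlKernel_of_lt ha hα₁ hα₂ le_rfl (by linarith)
  obtain ⟨c, hc, hlow⟩ := exists_eventually_mul_rpow_le_mlKernel_of_lt ha hα₁ hα₂ le_rfl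
    (half_lt_self (by linarith))
  obtain ⟨x₀, hx₀⟩ := eventually_atTop.1 hlow
  set β := α / 2 with hβ
  obtain ⟨δ, hδ, rfl⟩ : ∃ δ > 0, γ = β + δ := ⟨γ - β, sub_pos.2 hγ, by ring⟩
  have : 0 < Real.Gamma (δ + 1) := Real.Gamma_pos_of_pos (by linarith)
  have hβ₀ : 0 ≤ β := by linarith
  refine ⟨c * 2 ^ (-|β - 1|) * (2⁻¹ ^ δ / Real.Gamma (δ + 1)), by positivity, ?_⟩
  filter_upwards [eventually_gt_atTop 0, eventually_ge_atTop (2 * x₀)] with t ht htx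
  have hmass : ∫ s in 0..t / 2, rlKernel δ s = 2⁻¹ ^ δ / Real.Gamma (δ + 1) * t ^ δ := by
    have hconv := causalConv_rlKernel_rlKernel one_pos hδ (half_pos ht)
    simp only [causalConv, rlKernel_one, one_mul] at hconv
    rw [hconv, rlKernel, add_sub_cancel_left, add_comm 1 δ, div_eq_inv_mul t,
      Real.mul_rpow (by norm_num) ht.le, div_mul_eq_mul_div]
  rw [← causalConv_rlKernel_mlKernel a hα₁ hβ₀ hδ ht, causalConv_comm]
  refine le_of_eq_of_le ?_ (mul_rpow_mul_integral_le_causalConv (M := t / 2)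
    (continuous_mlKernel a hα₁ hβ₀) (fun x hx => mlKernel_nonneg ha hα₁ hα₂.le le_rfl hx) hc.le
    (fun x hx => hx₀ x (by linarith)) (intervalIntegrable_rlKernel hδ t)
    ((ae_restrict_mem measurableSet_Ici).mono fun s hs => rlKernel_nonneg hδ hs) ht
    ⟨by linarith, le_rfl⟩)
  rw [hmass, show β + δ - 1 = β - 1 + δ by ring, Real.rpow_add ht]
  ring

lemma exists_eventually_le_rpow_mul_causalConv_mlKernel (ha : 0 < a) (hα₁ : 1 ≤ α) (hα₂ : α < 2)
    (hγ : α / 2 ≤ γ) (hf : ∀ T > 0, IntervalIntegrable f volume 0 T)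
    (hf₀ : ∀ᵐ s ∂volume.restrict (Set.Ici 0), 0 ≤ f s) (hM : 0 ≤ M)
    (hpos : 0 < ∫ s in 0..M, f s) :
    ∃ δ > 0, ∀ᶠ t in atTop, δ ≤ t ^ (1 - γ) * causalConv (mlKernel a α γ) f t := by
  obtain ⟨c, hc, hk⟩ := exists_eventually_mul_rpow_le_mlKernel ha hα₁ hα₂ hγ
  obtain ⟨δ, hδ, hconv⟩ := exists_eventually_mul_rpow_le_causalConv
    (continuous_mlKernel a hα₁ (by linarith)) (fun x hx => mlKernel_nonneg ha hα₁ hα₂.le hγ hx) hc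
    hk hf hf₀ hM hpos
  refine ⟨δ, hδ, ?_⟩
  filter_upwards [eventually_gt_atTop 0, hconv] with t ht hconv_t
  calc δ = t ^ (1 - γ) * (δ * t ^ (γ - 1)) := by
        rw [mul_left_comm, ← Real.rpow_add ht, sub_add_sub_cancel', sub_self, Real.rpow_zero,
          mul_one]
    _ ≤ t ^ (1 - γ) * causalConv (mlKernel a α γ) f t := by gcongr

lemma integral_pos_of_mul_rpow_abs_le {t₀ : ℝ} (hb : 0 < b) (hp : 0 ≤ p)
    (hf : ∀ T > 0, IntervalIntegrable f volume 0 T) (hw : Continuous w)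
    (hfw : ∀ᵐ s ∂volume.restrict (Set.Ici 0), b * |w s| ^ p ≤ f s) (ht₀ : 0 ≤ t₀)
    (hwt₀ : w t₀ ≠ 0) : 0 < ∫ s in 0..t₀ + 1, f s := by
  have hpos : 0 < t₀ + 1 := by linarith
  have hcont : Continuous fun s => b * |w s| ^ p :=
    continuous_const.mul (hw.abs.rpow_const fun _ => Or.inr hp)
  calc 0 < ∫ s in 0..t₀ + 1, b * |w s| ^ p :=
        intervalIntegral.integral_pos hpos hcont.continuousOn (fun s _ => by positivity)
          ⟨t₀, ⟨ht₀, by linarith⟩, by positivity⟩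
    _ ≤ ∫ s in 0..t₀ + 1, f s :=
        intervalIntegral.integral_mono_ae_restrict hpos.le (hcont.intervalIntegrable _ _)
          (hf _ hpos) (ae_restrict_of_ae_restrict_of_subset Set.Icc_subset_Ici_self hfw)

lemma tendsto_rpow_mul_one_sub_mul_mlKernel_one (ha : 0 < a) (hα₁ : 1 < α) (hα₂ : α < 2)
    (hγ : 0 < γ) :
    Tendsto (fun t => t ^ (1 - γ) * (1 - a * mlKernel a α 1 t)) atTop (nhds 0) := by
  obtain ⟨C, hdecay⟩ := exists_abs_rlKernel_sub_mul_mlKernel_le_div ha hα₁.le hα₂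
    (by linarith : α / 2 ≤ 1) hα₁
  refine squeeze_zero_norm' ?_ (by simpa using (tendsto_rpow_neg_atTop hγ).const_mul C)
  filter_upwards [eventually_gt_atTop 0] with t ht
  have hpow : t ^ (-γ) = t ^ (1 - γ) / t := by
    rw [← Real.rpow_sub_one ht.ne', sub_sub_cancel_left]
  have h := hdecay t ht
  rw [rlKernel_one] at h
  rw [norm_mul, Real.norm_of_nonneg (by positivity), Real.norm_eq_abs, hpow, mul_div_left_comm]
  gcongr

lemma liminf_coe_pos_of_eventually_le {ι : Type*} {l : Filter ι} {u : ι → ℝ} {δ : ℝ} (hδ : 0 < δ)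
    (hu : ∀ᶠ i in l, δ ≤ u i) : 0 < liminf (fun i => (u i : EReal)) l :=
  (EReal.coe_pos.2 hδ).trans_le
    (le_liminf_of_le (by isBoundedDefault) (hu.mono fun _ h => EReal.coe_le_coe_iff.2 h))

end LowerBound

theorem liminf_pos_iv_general
    (γ α p a b : ℝ) (f w : ℝ → ℝ)
    (hα1 : 1 < α) (hα2 : α < 2) (hp : 0 ≤ p) (ha : 0 < a) (hb : 0 < b)
    (hf : ∀ T > (0 : ℝ), IntervalIntegrable f volume 0 T)
    (hw : Continuous w)
    (hw0 : ∃ t : ℝ, 0 ≤ t ∧ w t ≠ 0)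
    (hAC : ∀ T > (0 : ℝ), AC2On (capKernel α w) T)
    (heq : ∀ᵐ t ∂(volume.restrict (Set.Ici (0 : ℝ))),
      caputoD α w t + a * w t = rlInt γ f t ∧ f t ≥ b * |w t| ^ p)
    (hγα : α / 2 ≤ γ) (hw' : HasDerivAt w 0 0) :
    0 < liminf (fun t : ℝ => ((t ^ (1 - γ) * w t : ℝ) : EReal)) atTop := by
  have hγ : 0 < γ := by linarith
  have hfw : ∀ᵐ s ∂volume.restrict (Set.Ici 0), b * |w s| ^ p ≤ f s := heq.mono fun _ h => h.2
  have hvol (t : ℝ) (ht : 0 < t) := add_causalConv_eq_of_caputoD_add_eq hγ hα1 hα2 hf hw hw' hAC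
    (heq.mono fun _ h => h.1) ht
  obtain ⟨t₀, ht₀, hwt₀⟩ := hw0
  obtain ⟨δ, hδ, hforced⟩ := exists_eventually_le_rpow_mul_causalConv_mlKernel ha hα1.le hα2 hγα hf
    (hfw.mono fun s hs => (by positivity : 0 ≤ b * |w s| ^ p).trans hs) (by linarith)
    (integral_pos_of_mul_rpow_abs_le hb hp hf hw hfw ht₀ hwt₀)
  have hfree : Tendsto (fun t => w 0 * (t ^ (1 - γ) * (1 - a * mlKernel a α 1 t))) atTop
      (nhds 0) := by
    simpa using (tendsto_rpow_mul_one_sub_mul_mlKernel_one ha hα1 hα2 hγ).const_mul (w 0)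
  refine liminf_coe_pos_of_eventually_le (half_pos hδ) ?_
  filter_upwards [eventually_gt_atTop 0, hforced,
    hfree.eventually_const_le (neg_lt_zero.2 (half_pos hδ))] with t ht hforced_t hfree_t
  rw [eq_mul_add_causalConv_mlKernel_of_volterra hα1.le hγ.le hf hw hvol ht, mul_add,
    mul_left_comm]
  linarith

/-- Lemma 2.3 (iv): if γ ≥ α/2, α + γ ≤ 2 and w'(0) = 0, then liminf t^{1−γ} w(t) > 0. -/
theorem liminf_pos_iv
    (γ α p a b : ℝ) (f w : ℝ → ℝ)
    (hγ : 0 < γ) (hα1 : 1 < α) (hα2 : α < 2) (hp : 1 < p) (ha : 0 < a) (hb : 0 < b)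
    (hf : ∀ T > (0:ℝ), IntervalIntegrable f volume 0 T)
    (hw : ContDiff ℝ 1 w)
    (hw0 : ∃ t : ℝ, 0 ≤ t ∧ w t ≠ 0)
    (hAC : ∀ T > (0:ℝ), AC2On (capKernel α w) T)
    (heq : ∀ᵐ t ∂(volume.restrict (Set.Ici (0:ℝ))),
      caputoD α w t + a * w t = rlInt γ f t ∧ f t ≥ b * |w t| ^ p)
    (hγα : α / 2 ≤ γ) (hαγ : α + γ ≤ 2) (hw' : deriv w 0 = 0) :
    0 < liminf (fun t : ℝ => ((t ^ (1 - γ) * w t : ℝ) : EReal)) atTop :=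
  liminf_pos_iv_general γ α p a b f w hα1 hα2 (by linarith) ha hb hf hw.continuous hw0 hAC heq hγα
    (by simpa only [hw'] using (hw.differentiable one_ne_zero 0).hasDerivAt)
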